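/- Let ψ : [0,∞) → [0,∞) be a non-decreasing function with ψ(0) = 0 and ψ(t)/√t → 0 as t → ∞. There exist a positive constant C, an integer ℓ depending only on n, and a time T ≥ T₀(ψ) such that for all t ≥ T, sup{ |x − m_h| : x ∈ 𝒞(u(·,t)) ∩ (CS(h) + ψ(t)Bⁿ) } ≤ C ( (1 + ψ(t)²)/t + ((1 + ψ(t))/t)·(‖f‖_{L¹}/‖h‖_{L¹}) + e^{-t/2} t^{3n/2} (‖f‖_{W^{ℓ,∞}} + ‖g‖_{W^{ℓ,∞}})/‖h‖_{L¹} ). -/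

import Mathlib

open Real Set Filter MeasureTheory Metric Pointwise
open scoped Nat Topology

noncomputable section

variable {n : ℕ}

/-- The Laplacian of `v : ℝⁿ → ℝ` at `x`, as the sum of second partial derivatives. -/
def lap (v : EuclideanSpace ℝ (Fin n) → ℝ) (x : EuclideanSpace ℝ (Fin n)) : ℝ :=
  ∑ i : Fin n, iteratedDeriv 2 (fun a : ℝ => v (x + a • EuclideanSpace.single i (1 : ℝ))) 0

/-- `CS(φ)`: the convex hull of the support of `φ`. -/
def CS (v : EuclideanSpace ℝ (Fin n) → ℝ) : Set (EuclideanSpace ℝ (Fin n)) :=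
  convexHull ℝ (tsupport v)

/-- `d_φ`: the diameter of the support of `φ`. -/
def dsupp (v : EuclideanSpace ℝ (Fin n) → ℝ) : ℝ := Metric.diam (tsupport v)

/-- `δ(K,L) = sup_{η ∈ L} dist(η, K)`. -/
def deltaCC (K L : Set (EuclideanSpace ℝ (Fin n))) : ℝ :=
  sSup ((fun η => Metric.infDist η K) '' L)

/-- The centroid `m_h = (∫ h(y) y dy)/(∫ h(y) dy)`. -/
def centroid (h : EuclideanSpace ℝ (Fin n) → ℝ) : EuclideanSpace ℝ (Fin n) :=
  (∫ y, h y)⁻¹ • ∫ y, h y • y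

/-- `T₀(φ) = min{T ≥ 0 : ∀ t ≥ T, t ≥ φ(t) + max{d_h, δ(CS(h),CS(f)) + d_f}}`, `h = f + g`. -/
def T0 (f g : EuclideanSpace ℝ (Fin n) → ℝ) (phi : ℝ → ℝ) : ℝ :=
  sInf {T : ℝ | 0 ≤ T ∧ ∀ t ≥ T,
    phi t + max (dsupp (f + g)) (deltaCC (CS (f + g)) (CS f) + dsupp f) ≤ t}

/-- Sobolev `W^{ℓ,∞}`-type norm: sum of sup-norms of the iterated derivatives up to order `ℓ`. -/
def sobNorm (ℓ : ℕ) (v : EuclideanSpace ℝ (Fin n) → ℝ) : ℝ :=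
  ∑ i ∈ Finset.range (ℓ + 1), ⨆ x, ‖iteratedFDeriv ℝ i v x‖

/-- The `L¹` norm. -/
def L1norm (v : EuclideanSpace ℝ (Fin n) → ℝ) : ℝ := ∫ y, |v y|

/-- The sup norm. -/
def LinfNorm (v : EuclideanSpace ℝ (Fin n) → ℝ) : ℝ := ⨆ x, |v x|

/-- `𝒞(v)`: the critical points of `v` lying in the interior of its support. -/
def critSet (v : EuclideanSpace ℝ (Fin n) → ℝ) : Set (EuclideanSpace ℝ (Fin n)) :=
  {x | x ∈ interior (tsupport v) ∧ gradient v x = 0}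

/-!
By finite speed of propagation `u` has compactly supported slices, so its spatial Fourier transform
turns the equation into a damped oscillator at each frequency `ξ`. Up to an error `O(e^{-t/16})`
only the slow mode at low frequencies survives, and its amplitude is `𝓕 h` up to a factor depending
only on `|ξ|` and a correction of order `|ξ|²`. The equation `∇u(x,t) = 0`, tested against
`w = (∫ h)(x - m_h)`, then balances `|w|²` times a Gaussian second moment of order `t^{-(n+2)/2}`
against the cubic remainder of the phases `e^{2πi⟨x - y, ξ⟩}`, which costs only
`(1 + |x|)³ |w| t^{-(n+4)/2}`. Hence `|x - m_h| ≲ (1 + |x|)³ / t`, and since `|x| ≲ 1 + ψ(t)` with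
`ψ(t)² = o(t)`, one of the three powers of `|x|` is absorbed by `|x - m_h|` itself.
-/

section IntegralCalculus

theorem hasDerivAt_integral_of_compact {X F : Type*} [TopologicalSpace X] [T2Space X]
    [MeasurableSpace X] [BorelSpace X] {μ : Measure X} [IsFiniteMeasureOnCompacts μ]
    [NormedAddCommGroup F] [NormedSpace ℝ F] {G G' : X → ℝ → F} {K : Set X} (hK : IsCompact K)
    {a b t : ℝ} (ht : t ∈ Ioo a b)
    (hG : ContinuousOn (Function.uncurry G) (univ ×ˢ Ioo a b))
    (hG' : ContinuousOn (Function.uncurry G') (univ ×ˢ Ioo a b))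
    (hderiv : ∀ x, ∀ s ∈ Ioo a b, HasDerivAt (G x) (G' x s) s)
    (hzero : ∀ x ∉ K, ∀ s ∈ Ioo a b, G x s = 0) :
    HasDerivAt (fun s => ∫ x, G x s ∂μ) (∫ x, G' x t ∂μ) t := by
  have hzero' : ∀ x ∉ K, ∀ s ∈ Ioo a b, G' x s = 0 := fun x hx s hs =>
    (hderiv x s hs).unique <| (hasDerivAt_const s (0 : F)).congr_of_eventuallyEq <|
      Filter.eventually_of_mem (Ioo_mem_nhds hs.1 hs.2) fun r hr => hzero x hx r hr
  have integrable_slice : ∀ Φ : X → ℝ → F,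
      ContinuousOn (Function.uncurry Φ) (univ ×ˢ Ioo a b) →
      (∀ x ∉ K, ∀ s ∈ Ioo a b, Φ x s = 0) → ∀ s ∈ Ioo a b, Integrable (fun x => Φ x s) μ := by
    intro Φ hΦ h0 s hs
    have hcont : Continuous fun x => Φ x s :=
      hΦ.comp_continuous (f := fun x => (x, s)) (by fun_prop) fun x => ⟨mem_univ x, hs⟩
    exact hcont.integrable_of_hasCompactSupport (.intro hK fun x hx => h0 x hx s hs)
  obtain ⟨c, hac, hct⟩ := exists_between ht.1
  obtain ⟨d, htd, hdb⟩ := exists_between ht.2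
  have hsub : Icc c d ⊆ Ioo a b := Icc_subset_Ioo hac hdb
  obtain ⟨C, hC⟩ := (hK.prod (isCompact_Icc (a := c) (b := d))).exists_bound_of_continuousOn
    (hG'.mono (prod_mono (subset_univ _) hsub))
  refine (hasDerivAt_integral_of_dominated_loc_of_deriv_le
    (bound := K.indicator fun _ => C) (F := fun s x => G x s) (F' := fun s x => G' x s)
    (Icc_mem_nhds hct htd) ?_ (integrable_slice G hG hzero t ht)
    (integrable_slice G' hG' hzero' t ht).aestronglyMeasurable ?_ ?_
    (ae_of_all _ fun x s hs => hderiv x s (hsub hs))).2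
  · filter_upwards [Icc_mem_nhds hct htd] with s hs
    exact (integrable_slice G hG hzero s (hsub hs)).aestronglyMeasurable
  · refine ae_of_all _ fun x s hs => ?_
    by_cases hx : x ∈ K
    · rw [indicator_of_mem hx]; exact hC (x, s) ⟨hx, hs⟩
    · simp only [indicator_of_notMem hx, hzero' x hx s (hsub hs), norm_zero, le_refl]
  · exact (integrable_indicator_iff hK.measurableSet).2 (integrableOn_const hK.measure_lt_top.ne)

theorem hasLineDerivAt_const {E F : Type*} [NormedAddCommGroup E] [NormedSpace ℝ E]
    [NormedAddCommGroup F] [NormedSpace ℝ F] (c : F) (x v : E) :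
    HasLineDerivAt ℝ (fun _ => c) 0 x v :=
  hasDerivAt_const (0 : ℝ) c

theorem integral_eq_zero_of_hasLineDerivAt {E F : Type*} [NormedAddCommGroup E] [NormedSpace ℝ E]
    [FiniteDimensional ℝ E] [MeasurableSpace E] [BorelSpace E] {μ : Measure E}
    [μ.IsAddHaarMeasure] [NormedAddCommGroup F] [NormedSpace ℝ F] {w w' : E → F} {v : E}
    (hw : Continuous w) (hsupp : HasCompactSupport w) (hw' : Continuous w')
    (hderiv : ∀ x, HasLineDerivAt ℝ w (w' x) x v) : ∫ x, w' x ∂μ = 0 := by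
  have hsupp' : HasCompactSupport w' := .intro hsupp fun x hx =>
    (hderiv x).unique <| (hasLineDerivAt_const (0 : F) x v).congr_of_eventuallyEq <|
      notMem_tsupport_iff_eventuallyEq.1 hx
  simpa using integral_bilinear_hasLineDerivAt_right_eq_neg_left_of_integrable (μ := μ)
    (B := ContinuousLinearMap.lsmul ℝ ℝ) (f := fun _ => (1 : ℝ)) (f' := fun _ => 0) (by simp)
    (by simpa using hw'.integrable_of_hasCompactSupport hsupp')
    (by simpa using hw.integrable_of_hasCompactSupport hsupp)
    (fun x _ => hasLineDerivAt_const 1 x v) fun x _ => hderiv x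

end IntegralCalculus

section Slices

variable {E F : Type*} [NormedAddCommGroup E] [NormedSpace ℝ E] [NormedAddCommGroup F]
  [NormedSpace ℝ F] {Φ : E × ℝ → F} {Φ' : E × ℝ →L[ℝ] F} {x : E} {t : ℝ}

theorem hasDerivAt_timeSlice (h : HasFDerivAt Φ Φ' (x, t)) :
    HasDerivAt (fun s => Φ (x, s)) (Φ' (0, 1)) t :=
  h.comp_hasDerivAt t ((hasDerivAt_const t x).prodMk (hasDerivAt_id t))

theorem hasLineDerivAt_spaceSlice (h : HasFDerivAt Φ Φ' (x, t)) (v : E) :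
    HasLineDerivAt ℝ (fun z => Φ (z, t)) (Φ' (v, 0)) x v :=
  (h.comp (f := fun z => (z, t)) x (hasFDerivAt_prodMk_left x t)).hasLineDerivAt v

theorem hasFDerivAt_clm_apply_const {G : Type*} [NormedAddCommGroup G] [NormedSpace ℝ G]
    {D : E → G →L[ℝ] F} {H : E →L[ℝ] G →L[ℝ] F} (h : HasFDerivAt D H x) (w : G) :
    HasFDerivAt (fun p => D p w) (H.flip w) x :=
  (ContinuousLinearMap.apply ℝ F w).hasFDerivAt.comp x h

theorem hasDerivAt_add_smul_of_hasLineDerivAt {v v' : E → F} {e : E} {a : ℝ}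
    (h : HasLineDerivAt ℝ v (v' (x + a • e)) (x + a • e) e) :
    HasDerivAt (fun s : ℝ => v (x + s • e)) (v' (x + a • e)) a := by
  have h' : HasDerivAt (fun s : ℝ => v (x + a • e + s • e)) (v' (x + a • e)) (a - a) := by
    rwa [sub_self]
  refine (h'.comp_sub_const a a).congr_of_eventuallyEq (.of_forall fun s => ?_)
  simp only [add_assoc, ← add_smul, add_sub_cancel]

theorem derivWithin_timeSlice_zero
    (h : HasFDerivWithinAt Φ Φ' (univ ×ˢ Ici 0) (x, 0)) :
    derivWithin (fun s => Φ (x, s)) (Ici 0) 0 = Φ' (0, 1) := by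
  have hline : HasDerivWithinAt (fun s : ℝ => (x, s)) ((0 : E), (1 : ℝ)) (Ici 0) 0 :=
    ((hasDerivAt_const _ x).prodMk (hasDerivAt_id _)).hasDerivWithinAt
  exact (h.comp_hasDerivWithinAt (0 : ℝ) hline fun s hs => ⟨mem_univ _, hs⟩).derivWithin
    (uniqueDiffOn_Ici (0 : ℝ) 0 self_mem_Ici)

theorem fderiv_spaceSlice_zero
    (h : HasFDerivWithinAt Φ Φ' (univ ×ˢ Ici 0) (x, 0)) (v : E) :
    fderiv ℝ (fun z => Φ (z, 0)) x v = Φ' (v, 0) := by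
  have hslice : HasFDerivAt (fun z => Φ (z, 0)) (Φ'.comp (.inl ℝ E ℝ)) x :=
    hasFDerivWithinAt_univ.1 <| h.comp (f := fun z => (z, 0)) x
      (hasFDerivAt_prodMk_left x (0 : ℝ)).hasFDerivWithinAt
      fun z _ => ⟨mem_univ z, self_mem_Ici⟩
  rw [hslice.fderiv]
  rfl

theorem continuous_spaceSlice {X Y : Type*} [TopologicalSpace X] [TopologicalSpace Y]
    {Φ : X × ℝ → Y} {I : Set ℝ} (h : ContinuousOn Φ (univ ×ˢ I)) {t : ℝ} (ht : t ∈ I) :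
    Continuous fun z => Φ (z, t) :=
  h.comp_continuous (by fun_prop) fun _ => ⟨mem_univ _, ht⟩

end Slices

section ClassicalSolutions

variable {E ι : Type*} [NormedAddCommGroup E] [InnerProductSpace ℝ E] [Fintype ι]

/-- `U` is a classical solution of the damped wave equation on `E × [0, ∞)` with data `(f, g)`, the
Laplacian being computed in the orthonormal basis `b`. The first and second derivatives `D` and `H`
of `U` are part of the data, so that `D` makes sense on the initial slice, where `U` has only a
one-sided time derivative. -/
structure IsDampedWave (b : OrthonormalBasis ι ℝ E) (U : E × ℝ → ℝ) (D : E × ℝ → (E × ℝ →L[ℝ] ℝ))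
    (H : E × ℝ → (E × ℝ →L[ℝ] E × ℝ →L[ℝ] ℝ)) (f g : E → ℝ) : Prop where
  continuousOn : ContinuousOn U (univ ×ˢ Ici 0)
  continuousOn_fderiv : ContinuousOn D (univ ×ˢ Ici 0)
  continuousOn_hess : ContinuousOn H (univ ×ˢ Ioi 0)
  hasFDerivAt : ∀ p, 0 < p.2 → HasFDerivAt U (D p) p
  hasFDerivAt_fderiv : ∀ p, 0 < p.2 → HasFDerivAt D (H p) p
  hess_symm : ∀ p, 0 < p.2 → ∀ v w, H p v w = H p w v
  equation : ∀ p, 0 < p.2 → H p (0, 1) (0, 1) - ∑ i, H p (b i, 0) (b i, 0) + D p (0, 1) = 0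
  initial : ∀ x, U (x, 0) = f x
  initial_time : ∀ x, D (x, 0) (0, 1) = g x
  initial_space : ∀ x v, D (x, 0) (v, 0) = fderiv ℝ f x v

namespace IsDampedWave

variable {b : OrthonormalBasis ι ℝ E} {U : E × ℝ → ℝ} {D : E × ℝ → (E × ℝ →L[ℝ] ℝ)}
  {H : E × ℝ → (E × ℝ →L[ℝ] E × ℝ →L[ℝ] ℝ)} {f g : E → ℝ}

theorem hasFDerivAt_fderiv_apply (hU : IsDampedWave b U D H f g) {p : E × ℝ} (hp : 0 < p.2)
    (w : E × ℝ) : HasFDerivAt (fun p => D p w) ((H p).flip w) p :=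
  hasFDerivAt_clm_apply_const (hU.hasFDerivAt_fderiv p hp) w

theorem continuousOn_fderiv_apply (hU : IsDampedWave b U D H f g) (w : E × ℝ) :
    ContinuousOn (fun p => D p w) (univ ×ˢ Ici 0) :=
  hU.continuousOn_fderiv.clm_apply continuousOn_const

theorem continuousOn_hess_apply (hU : IsDampedWave b U D H f g) (v w : E × ℝ) :
    ContinuousOn (fun p => H p v w) (univ ×ˢ Ioi 0) :=
  (hU.continuousOn_hess.clm_apply continuousOn_const).clm_apply continuousOn_const

end IsDampedWave

end ClassicalSolutions

section EuclideanSolutions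

local notation "𝔼" => EuclideanSpace ℝ (Fin n)

theorem lap_eq_sum_of_hasLineDerivAt {v : 𝔼 → ℝ} {v' : Fin n → 𝔼 → ℝ} {v'' : Fin n → ℝ} {x : 𝔼}
    (hv : ∀ i z, HasLineDerivAt ℝ v (v' i z) z (EuclideanSpace.basisFun (Fin n) ℝ i))
    (hv' : ∀ i, HasLineDerivAt ℝ (v' i) (v'' i) x (EuclideanSpace.basisFun (Fin n) ℝ i)) :
    lap v x = ∑ i, v'' i := by
  refine Finset.sum_congr rfl fun i _ => ?_
  rw [← EuclideanSpace.basisFun_apply]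
  have hderiv : deriv (fun a : ℝ => v (x + a • EuclideanSpace.basisFun (Fin n) ℝ i))
      = fun a => v' i (x + a • EuclideanSpace.basisFun (Fin n) ℝ i) :=
    funext fun a => (hasDerivAt_add_smul_of_hasLineDerivAt (hv i _)).deriv
  rw [iteratedDeriv_succ, iteratedDeriv_one, hderiv]
  exact (hv' i).deriv

theorem wave_operator_eq {u : 𝔼 → ℝ → ℝ}
    {D : 𝔼 × ℝ → (𝔼 × ℝ →L[ℝ] ℝ)} {H : 𝔼 × ℝ → (𝔼 × ℝ →L[ℝ] 𝔼 × ℝ →L[ℝ] ℝ)}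
    (hu : ∀ p : 𝔼 × ℝ, 0 < p.2 → HasFDerivAt (fun q => u q.1 q.2) (D p) p)
    (hD : ∀ p : 𝔼 × ℝ, 0 < p.2 → HasFDerivAt D (H p) p) {x : 𝔼} {t : ℝ} (ht : 0 < t) :
    deriv (deriv fun s => u x s) t - lap (fun z => u z t) x + deriv (fun s => u x s) t
      = H (x, t) (0, 1) (0, 1) - ∑ i, H (x, t) (EuclideanSpace.basisFun (Fin n) ℝ i, 0)
          (EuclideanSpace.basisFun (Fin n) ℝ i, 0) + D (x, t) (0, 1) := by
  have htime : ∀ s, 0 < s → deriv (fun s => u x s) s = D (x, s) (0, 1) := fun s hs =>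
    (hasDerivAt_timeSlice (hu (x, s) hs)).deriv
  have htime2 : deriv (deriv fun s => u x s) t = H (x, t) (0, 1) (0, 1) := by
    rw [EventuallyEq.deriv_eq (eventually_of_mem (Ioi_mem_nhds ht) htime)]
    exact (hasDerivAt_timeSlice (hasFDerivAt_clm_apply_const (hD (x, t) ht) (0, 1))).deriv
  have hspace : lap (fun z => u z t) x = ∑ i, H (x, t) (EuclideanSpace.basisFun (Fin n) ℝ i, 0)
      (EuclideanSpace.basisFun (Fin n) ℝ i, 0) :=
    lap_eq_sum_of_hasLineDerivAt
      (v' := fun i z => D (z, t) (EuclideanSpace.basisFun (Fin n) ℝ i, 0))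
      (fun i z => hasLineDerivAt_spaceSlice (hu (z, t) ht) (EuclideanSpace.basisFun (Fin n) ℝ i))
      (fun i => hasLineDerivAt_spaceSlice
        (hasFDerivAt_clm_apply_const (hD (x, t) ht) (EuclideanSpace.basisFun (Fin n) ℝ i, 0)) _)
  rw [htime2, hspace, htime t ht]

theorem exists_isDampedWave {u : 𝔼 → ℝ → ℝ} {f g : 𝔼 → ℝ}
    (hreg : ContDiffOn ℝ 2 (fun p : 𝔼 × ℝ => u p.1 p.2) (univ ×ˢ Ici 0))
    (hpde : ∀ x, ∀ t > (0 : ℝ),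
      deriv (deriv fun s => u x s) t - lap (fun z => u z t) x + deriv (fun s => u x s) t = 0)
    (hu0 : ∀ x, u x 0 = f x) (hu1 : ∀ x, derivWithin (fun s => u x s) (Ici 0) 0 = g x) :
    ∃ D H, IsDampedWave (EuclideanSpace.basisFun (Fin n) ℝ) (fun p => u p.1 p.2) D H f g := by
  set S : Set (𝔼 × ℝ) := univ ×ˢ Ici 0
  set D := fderivWithin ℝ (fun p : 𝔼 × ℝ => u p.1 p.2) S
  have hS : ∀ p : 𝔼 × ℝ, 0 < p.2 → S ∈ 𝓝 p := fun p hp =>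
    prod_mem_nhds univ_mem (Ici_mem_nhds hp)
  have hD : ContDiffOn ℝ 1 D S :=
    hreg.fderivWithin (uniqueDiffOn_univ.prod (uniqueDiffOn_Ici 0)) (by norm_num)
  have hwithin : ∀ p ∈ S, HasFDerivWithinAt (fun p : 𝔼 × ℝ => u p.1 p.2) (D p) S p := fun p hp =>
    (hreg.differentiableOn two_ne_zero p hp).hasFDerivWithinAt
  have hderiv : ∀ p : 𝔼 × ℝ, 0 < p.2 → HasFDerivAt (fun p : 𝔼 × ℝ => u p.1 p.2) (D p) p :=
    fun p hp => (hwithin p ⟨mem_univ _, hp.le⟩).hasFDerivAt (hS p hp)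
  have hderiv2 : ∀ p : 𝔼 × ℝ, 0 < p.2 → HasFDerivAt D (fderiv ℝ D p) p := fun p hp =>
    ((hD.contDiffAt (hS p hp)).differentiableAt one_ne_zero).hasFDerivAt
  have hinit : ∀ x, (x, (0 : ℝ)) ∈ S := fun x => ⟨mem_univ x, self_mem_Ici⟩
  refine ⟨D, fderiv ℝ D, hreg.continuousOn, hD.continuousOn, ?_, hderiv, hderiv2, ?_, ?_, hu0,
    fun x => ?_, fun x v => ?_⟩
  · exact (hD.mono (prod_mono le_rfl Ioi_subset_Ici_self)).continuousOn_fderiv_of_isOpen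
      (isOpen_univ.prod isOpen_Ioi) le_rfl
  · exact fun p hp => second_derivative_symmetric_of_eventually
      (eventually_of_mem (isOpen_Ioi.preimage continuous_snd |>.mem_nhds hp) hderiv) (hderiv2 p hp)
  · rintro ⟨x, t⟩ ht
    rw [← wave_operator_eq hderiv hderiv2 ht, hpde x t ht]
  · rw [← hu1 x]
    exact (derivWithin_timeSlice_zero (hwithin _ (hinit x))).symm
  · rw [← funext hu0]
    exact (fderiv_spaceSlice_zero (hwithin _ (hinit x)) v).symm

end EuclideanSolutions

section DomainOfDependence

open scoped RealInnerProductSpace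

section ConeCutoff

variable {E : Type*} [NormedAddCommGroup E] {x₀ x : E} {t₀ t : ℝ}

/-- A smooth weight on space-time, positive exactly where `‖x - x₀‖² < 9t₀² - 6t₀t`. It localizes
the wave energy: this region shrinks at speed at least `1`, yet contains `(x₀, t)` for `t ≤ t₀`. -/
def coneCutoff (x₀ : E) (t₀ : ℝ) (p : E × ℝ) : ℝ :=
  expNegInvGlue (9 * t₀ ^ 2 - 6 * t₀ * p.2 - ‖p.1 - x₀‖ ^ 2)

theorem coneCutoff_nonneg (p : E × ℝ) : 0 ≤ coneCutoff x₀ t₀ p :=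
  expNegInvGlue.nonneg _

theorem coneCutoff_pos (ht₀ : 0 < t₀) (ht : t ≤ t₀) : 0 < coneCutoff x₀ t₀ (x₀, t) :=
  expNegInvGlue.pos_of_pos <| by simp only [sub_self, norm_zero]; nlinarith

theorem coneCutoff_eq_zero (ht₀ : 0 < t₀) (ht : 0 ≤ t) (hx : x ∉ closedBall x₀ (3 * t₀)) :
    coneCutoff x₀ t₀ (x, t) = 0 := by
  rw [mem_closedBall, dist_eq_norm, not_le] at hx
  exact expNegInvGlue.zero_of_nonpos (by nlinarith [mul_nonneg ht₀.le ht])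

variable [InnerProductSpace ℝ E]

theorem contDiff_coneCutoff : ContDiff ℝ 1 (coneCutoff x₀ t₀) := by
  refine expNegInvGlue.contDiff.comp ((contDiff_const.sub ?_).sub ?_)
  · exact contDiff_const.mul contDiff_snd
  · exact (contDiff_fst.sub contDiff_const).norm_sq ℝ

theorem fderiv_coneCutoff_eq_zero (ht₀ : 0 < t₀) (ht : 0 ≤ t) (hx : x ∉ closedBall x₀ (3 * t₀)) :
    fderiv ℝ (coneCutoff x₀ t₀) (x, t) = 0 :=
  IsLocalMin.fderiv_eq_zero <| Eventually.of_forall fun p => by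
    rw [coneCutoff_eq_zero ht₀ ht hx]
    exact coneCutoff_nonneg p

theorem fderiv_coneCutoff_apply (p v : E × ℝ) :
    fderiv ℝ (coneCutoff x₀ t₀) p v
      = deriv expNegInvGlue (9 * t₀ ^ 2 - 6 * t₀ * p.2 - ‖p.1 - x₀‖ ^ 2)
        * -(6 * t₀ * v.2 + 2 * ⟪p.1 - x₀, v.1⟫) := by
  have hglue := (expNegInvGlue.contDiff (n := 1)).differentiable one_ne_zero
  have hphase := ((hasFDerivAt_snd.const_mul (6 * t₀)).const_sub (9 * t₀ ^ 2)).sub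
    ((hasFDerivAt_fst (𝕜 := ℝ) (p := p)).sub_const x₀).norm_sq
  have hcut : HasFDerivAt (coneCutoff x₀ t₀) _ p :=
    (hglue _).hasDerivAt.comp_hasFDerivAt p hphase
  rw [hcut.fderiv]
  simp only [map_sub, ContinuousLinearMap.sub_comp, ContinuousLinearMap.coe_snd',
    ContinuousLinearMap.coe_fst', ContinuousLinearMap.comp_apply, smul_apply, sub_apply, neg_apply,
    coe_innerSL_apply, smul_eq_mul, nsmul_eq_mul, Nat.cast_ofNat, inner_sub_left]
  ring

end ConeCutoff

section EnergyDensity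

variable {E ι : Type*} [NormedAddCommGroup E] [InnerProductSpace ℝ E] [Fintype ι]
  {b : OrthonormalBasis ι ℝ E} {U : E × ℝ → ℝ} {D : E × ℝ → (E × ℝ →L[ℝ] ℝ)}
  {H : E × ℝ → (E × ℝ →L[ℝ] E × ℝ →L[ℝ] ℝ)} {f g : E → ℝ} {x₀ x : E} {t₀ t : ℝ}

/-- The product of the derivatives of a wave in the directions `v` and `w`, localized by
`coneCutoff`; these are the components of its localized stress-energy tensor. -/
def localizedStress (D : E × ℝ → (E × ℝ →L[ℝ] ℝ)) (x₀ : E) (t₀ : ℝ) (v w p : E × ℝ) : ℝ :=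
  coneCutoff x₀ t₀ p * (D p v * D p w)

/-- The derivative of `localizedStress D x₀ t₀ v w` in the direction `z`. -/
def localizedStressDeriv (D : E × ℝ → (E × ℝ →L[ℝ] ℝ)) (H : E × ℝ → (E × ℝ →L[ℝ] E × ℝ →L[ℝ] ℝ))
    (x₀ : E) (t₀ : ℝ) (z v w p : E × ℝ) : ℝ :=
  fderiv ℝ (coneCutoff x₀ t₀) p z * (D p v * D p w)
    + coneCutoff x₀ t₀ p * (H p z v * D p w + D p v * H p z w)

theorem localizedStress_eq_zero (ht₀ : 0 < t₀) (ht : 0 ≤ t) (hx : x ∉ closedBall x₀ (3 * t₀))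
    (v w : E × ℝ) : localizedStress D x₀ t₀ v w (x, t) = 0 := by
  rw [localizedStress, coneCutoff_eq_zero ht₀ ht hx, zero_mul]

theorem localizedStressDeriv_eq_zero (ht₀ : 0 < t₀) (ht : 0 ≤ t)
    (hx : x ∉ closedBall x₀ (3 * t₀)) (z v w : E × ℝ) :
    localizedStressDeriv D H x₀ t₀ z v w (x, t) = 0 := by
  rw [localizedStressDeriv, coneCutoff_eq_zero ht₀ ht hx, fderiv_coneCutoff_eq_zero ht₀ ht hx]
  simp

namespace IsDampedWave

theorem hasFDerivAt_localizedStress (hU : IsDampedWave b U D H f g) {p : E × ℝ} (hp : 0 < p.2)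
    (v w : E × ℝ) : ∃ S' : E × ℝ →L[ℝ] ℝ, HasFDerivAt (localizedStress D x₀ t₀ v w) S' p ∧
      ∀ z, S' z = localizedStressDeriv D H x₀ t₀ z v w p := by
  have hcut : HasFDerivAt (coneCutoff x₀ t₀) (fderiv ℝ (coneCutoff x₀ t₀) p) p :=
    (contDiff_coneCutoff.differentiable one_ne_zero p).hasFDerivAt
  refine ⟨_, hcut.mul
    ((hU.hasFDerivAt_fderiv_apply hp v).mul (hU.hasFDerivAt_fderiv_apply hp w)), fun z => ?_⟩
  simp only [localizedStressDeriv, add_apply, smul_apply, ContinuousLinearMap.flip_apply, smul_add,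
    smul_eq_mul]
  ring

theorem continuousOn_localizedStress (hU : IsDampedWave b U D H f g) (v w : E × ℝ) :
    ContinuousOn (localizedStress D x₀ t₀ v w) (univ ×ˢ Ici 0) :=
  contDiff_coneCutoff.continuous.continuousOn.mul
    ((hU.continuousOn_fderiv_apply v).mul (hU.continuousOn_fderiv_apply w))

theorem continuousOn_localizedStressDeriv (hU : IsDampedWave b U D H f g) (z v w : E × ℝ) :
    ContinuousOn (localizedStressDeriv D H x₀ t₀ z v w) (univ ×ˢ Ioi 0) := by
  have hD : ∀ w, ContinuousOn (fun p => D p w) (univ ×ˢ Ioi 0) := fun w =>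
    (hU.continuousOn_fderiv_apply w).mono (prod_mono le_rfl Ioi_subset_Ici_self)
  have hcut : Continuous fun p => fderiv ℝ (coneCutoff x₀ t₀) p z :=
    (contDiff_coneCutoff.continuous_fderiv one_ne_zero).clm_apply continuous_const
  exact (hcut.continuousOn.mul ((hD v).mul (hD w))).add <|
    contDiff_coneCutoff.continuous.continuousOn.mul <|
      ((hU.continuousOn_hess_apply z v).mul (hD w)).add
        ((hD v).mul (hU.continuousOn_hess_apply z w))

end IsDampedWave

/-- The localized energy density `|∂ₜU|² + |∇U|²` of a wave with derivative `D`. -/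
def energyDensity (b : OrthonormalBasis ι ℝ E) (D : E × ℝ → (E × ℝ →L[ℝ] ℝ)) (x₀ : E) (t₀ : ℝ)
    (p : E × ℝ) : ℝ :=
  localizedStress D x₀ t₀ (0, 1) (0, 1) p
    + ∑ i, localizedStress D x₀ t₀ (b i, 0) (b i, 0) p

/-- The time derivative of `energyDensity b D x₀ t₀`. -/
def energyDensityDeriv (b : OrthonormalBasis ι ℝ E) (D : E × ℝ → (E × ℝ →L[ℝ] ℝ))
    (H : E × ℝ → (E × ℝ →L[ℝ] E × ℝ →L[ℝ] ℝ)) (x₀ : E) (t₀ : ℝ) (p : E × ℝ) : ℝ :=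
  localizedStressDeriv D H x₀ t₀ (0, 1) (0, 1) (0, 1) p
    + ∑ i, localizedStressDeriv D H x₀ t₀ (0, 1) (b i, 0) (b i, 0) p

theorem energyDensity_nonneg (p : E × ℝ) : 0 ≤ energyDensity b D x₀ t₀ p :=
  add_nonneg (mul_nonneg (coneCutoff_nonneg p) (mul_self_nonneg _)) <|
    Finset.sum_nonneg fun _ _ => mul_nonneg (coneCutoff_nonneg p) (mul_self_nonneg _)

theorem energyDensity_eq_zero (ht₀ : 0 < t₀) (ht : 0 ≤ t) (hx : x ∉ closedBall x₀ (3 * t₀)) :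
    energyDensity b D x₀ t₀ (x, t) = 0 := by
  simp only [energyDensity, localizedStress_eq_zero ht₀ ht hx, Finset.sum_const_zero, add_zero]

theorem energyDensityDeriv_eq_zero (ht₀ : 0 < t₀) (ht : 0 ≤ t) (hx : x ∉ closedBall x₀ (3 * t₀)) :
    energyDensityDeriv b D H x₀ t₀ (x, t) = 0 := by
  simp only [energyDensityDeriv, localizedStressDeriv_eq_zero ht₀ ht hx, Finset.sum_const_zero,
    add_zero]

theorem timeDeriv_eq_zero_of_energyDensity (ht₀ : 0 < t₀) (ht : t ≤ t₀)
    (h : energyDensity b D x₀ t₀ (x₀, t) = 0) : D (x₀, t) (0, 1) = 0 := by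
  have htime := ((add_eq_zero_iff_of_nonneg
    (mul_nonneg (coneCutoff_nonneg _) (mul_self_nonneg _))
    (Finset.sum_nonneg fun _ _ => mul_nonneg (coneCutoff_nonneg _) (mul_self_nonneg _))).1 h).1
  simpa [(coneCutoff_pos ht₀ ht).ne'] using htime

theorem two_mul_mul_sum_mul_le {z d : ι → ℝ} {r : ℝ} (hr : 0 < r) (hz : ∑ i, z i ^ 2 ≤ r ^ 2)
    (a : ℝ) : 2 * a * ∑ i, z i * d i ≤ r * (a ^ 2 + ∑ i, d i ^ 2) := by
  have hcs : (∑ i, z i * d i) ^ 2 ≤ r ^ 2 * ∑ i, d i ^ 2 :=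
    (Finset.sum_mul_sq_le_sq_mul_sq _ _ _).trans
      (mul_le_mul_of_nonneg_right hz (Finset.sum_nonneg fun i _ => sq_nonneg _))
  have hscaled : 0 ≤ r * (r * (a ^ 2 + ∑ i, d i ^ 2) - 2 * a * ∑ i, z i * d i) := by
    nlinarith [sq_nonneg (r * a - ∑ i, z i * d i)]
  linarith [nonneg_of_mul_nonneg_right hscaled hr]

theorem fderiv_coneCutoff_flux_le (ht₀ : 0 < t₀) (hx : x ∈ closedBall x₀ (3 * t₀)) (a : ℝ)
    (d : ι → ℝ) :
    fderiv ℝ (coneCutoff x₀ t₀) (x, t) (0, 1) * (a ^ 2 + ∑ i, d i ^ 2)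
      ≤ 2 * ∑ i, fderiv ℝ (coneCutoff x₀ t₀) (x, t) (b i, 0) * (a * d i) := by
  have hz : ∑ i, ⟪x - x₀, b i⟫ ^ 2 ≤ (3 * t₀) ^ 2 := by
    rw [b.sum_sq_inner_left]
    exact pow_le_pow_left₀ (norm_nonneg _) (mem_closedBall_iff_norm.1 hx) 2
  have hflux := mul_le_mul_of_nonneg_left (two_mul_mul_sum_mul_le (d := d) (by positivity) hz a)
    (expNegInvGlue.monotone.deriv_nonneg
      (x := 9 * t₀ ^ 2 - 6 * t₀ * t - ‖x - x₀‖ ^ 2))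
  have hsum : ∑ i, fderiv ℝ (coneCutoff x₀ t₀) (x, t) (b i, 0) * (a * d i)
      = -(2 * a * deriv expNegInvGlue (9 * t₀ ^ 2 - 6 * t₀ * t - ‖x - x₀‖ ^ 2)
        * ∑ i, ⟪x - x₀, b i⟫ * d i) := by
    rw [Finset.mul_sum, ← Finset.sum_neg_distrib]
    refine Finset.sum_congr rfl fun i _ => ?_
    rw [fderiv_coneCutoff_apply, mul_zero, zero_add]
    ring
  rw [hsum, fderiv_coneCutoff_apply, inner_zero_right, mul_zero, add_zero, mul_one]
  linarith

namespace IsDampedWave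

theorem energyDensityDeriv_le (hU : IsDampedWave b U D H f g) (ht₀ : 0 < t₀) (ht : 0 < t) (x : E) :
    energyDensityDeriv b D H x₀ t₀ (x, t)
      ≤ 2 * ∑ i, localizedStressDeriv D H x₀ t₀ (b i, 0) (0, 1) (b i, 0) (x, t) := by
  by_cases hx : x ∈ closedBall x₀ (3 * t₀)
  swap
  · simp only [energyDensityDeriv_eq_zero ht₀ ht.le hx, localizedStressDeriv_eq_zero ht₀ ht.le hx,
      Finset.sum_const_zero, mul_zero, le_refl]
  have hflux := fderiv_coneCutoff_flux_le (b := b) (t := t) ht₀ hx (D (x, t) (0, 1))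
    fun i => D (x, t) (b i, 0)
  have hdamp : 0 ≤ coneCutoff x₀ t₀ (x, t) * D (x, t) (0, 1) ^ 2 :=
    mul_nonneg (coneCutoff_nonneg _) (sq_nonneg _)
  have hwave : H (x, t) (0, 1) (0, 1) = ∑ i, H (x, t) (b i, 0) (b i, 0) - D (x, t) (0, 1) := by
    linarith [hU.equation (x, t) ht]
  have hcancel : energyDensityDeriv b D H x₀ t₀ (x, t)
      - 2 * ∑ i, localizedStressDeriv D H x₀ t₀ (b i, 0) (0, 1) (b i, 0) (x, t)
      = fderiv ℝ (coneCutoff x₀ t₀) (x, t) (0, 1)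
          * (D (x, t) (0, 1) ^ 2 + ∑ i, D (x, t) (b i, 0) ^ 2)
        - 2 * ∑ i, fderiv ℝ (coneCutoff x₀ t₀) (x, t) (b i, 0)
          * (D (x, t) (0, 1) * D (x, t) (b i, 0))
        - 2 * (coneCutoff x₀ t₀ (x, t) * D (x, t) (0, 1) ^ 2) := by
    simp only [energyDensityDeriv, localizedStressDeriv, hwave, sq,
      hU.hess_symm (x, t) ht (b _, 0) (0, 1), Finset.sum_add_distrib, mul_add, ← Finset.mul_sum,
      mul_comm (D (x, t) (b _, 0))]
    ring
  linarith

theorem hasDerivAt_energyDensity (hU : IsDampedWave b U D H f g) (ht : 0 < t) (x : E) :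
    HasDerivAt (fun s => energyDensity b D x₀ t₀ (x, s)) (energyDensityDeriv b D H x₀ t₀ (x, t))
      t := by
  have hstress : ∀ v w, HasDerivAt (fun s => localizedStress D x₀ t₀ v w (x, s))
      (localizedStressDeriv D H x₀ t₀ (0, 1) v w (x, t)) t := fun v w => by
    obtain ⟨S', hS', happly⟩ := hU.hasFDerivAt_localizedStress (x₀ := x₀) (t₀ := t₀)
      (p := (x, t)) ht v w
    exact happly (0, 1) ▸ hasDerivAt_timeSlice hS'
  exact (hstress _ _).add (HasDerivAt.fun_sum fun i _ => hstress _ _)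

theorem continuousOn_energyDensity (hU : IsDampedWave b U D H f g) :
    ContinuousOn (energyDensity b D x₀ t₀) (univ ×ˢ Ici 0) :=
  (hU.continuousOn_localizedStress _ _).add <|
    continuousOn_finsetSum _ fun _ _ => hU.continuousOn_localizedStress _ _

theorem continuousOn_energyDensityDeriv (hU : IsDampedWave b U D H f g) :
    ContinuousOn (energyDensityDeriv b D H x₀ t₀) (univ ×ˢ Ioi 0) :=
  (hU.continuousOn_localizedStressDeriv _ _ _).add <|
    continuousOn_finsetSum _ fun _ _ => hU.continuousOn_localizedStressDeriv _ _ _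

theorem energyDensity_initial_eq_zero (hU : IsDampedWave b U D H f g)
    (hf : f =ᶠ[𝓝 x] 0) (hg : g x = 0) : energyDensity b D x₀ t₀ (x, 0) = 0 := by
  have hspace : ∀ v, D (x, 0) (v, 0) = 0 := fun v => by
    rw [hU.initial_space, hf.fderiv_eq, fderiv_zero]
    rfl
  simp [energyDensity, localizedStress, hspace, hU.initial_time, hg]

end IsDampedWave

end EnergyDensity

section FinitePropagation

theorem eventually_far {E : Type*} [SeminormedAddCommGroup E] {R : ℝ} {p : E × ℝ} (hp : 0 < p.2)
    (hfar : R + 3 * p.2 < ‖p.1‖) : ∀ᶠ q in 𝓝 p, 0 < q.2 ∧ R + 3 * q.2 < ‖q.1‖ :=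
  ((isOpen_lt continuous_const continuous_snd).eventually_mem hp).and
    ((isOpen_lt (f := fun q : E × ℝ => R + 3 * q.2) (by fun_prop) (by fun_prop)).eventually_mem
      hfar)

variable {E ι : Type*} [NormedAddCommGroup E] [InnerProductSpace ℝ E] [FiniteDimensional ℝ E]
  [MeasurableSpace E] [BorelSpace E] [Fintype ι]
  {b : OrthonormalBasis ι ℝ E} {U : E × ℝ → ℝ} {D : E × ℝ → (E × ℝ →L[ℝ] ℝ)}
  {H : E × ℝ → (E × ℝ →L[ℝ] E × ℝ →L[ℝ] ℝ)} {f g : E → ℝ} {x₀ : E} {t₀ t R : ℝ}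

/-- The localized energy `∫ |∂ₜU|² + |∇U|²` at time `t`. -/
def localEnergy (b : OrthonormalBasis ι ℝ E) (D : E × ℝ → (E × ℝ →L[ℝ] ℝ)) (x₀ : E) (t₀ t : ℝ) :
    ℝ :=
  ∫ x, energyDensity b D x₀ t₀ (x, t)

namespace IsDampedWave

theorem integral_localizedStressDeriv_eq_zero (hU : IsDampedWave b U D H f g) (ht₀ : 0 < t₀)
    (ht : 0 < t) (v : E) (w w' : E × ℝ) :
    ∫ x, localizedStressDeriv D H x₀ t₀ (v, 0) w w' (x, t) = 0 := by
  refine integral_eq_zero_of_hasLineDerivAt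
    (w := fun x => localizedStress D x₀ t₀ w w' (x, t)) (v := v)
    (continuous_spaceSlice (hU.continuousOn_localizedStress w w') ht.le)
    (.intro (isCompact_closedBall x₀ (3 * t₀)) fun x hx => localizedStress_eq_zero ht₀ ht.le hx _ _)
    (continuous_spaceSlice (hU.continuousOn_localizedStressDeriv _ w w') ht) fun x => ?_
  obtain ⟨S', hS', happly⟩ := hU.hasFDerivAt_localizedStress (x₀ := x₀) (t₀ := t₀)
    (p := (x, t)) ht w w'
  exact happly (v, 0) ▸ hasLineDerivAt_spaceSlice hS' v

theorem integral_energyDensityDeriv_nonpos (hU : IsDampedWave b U D H f g) (ht₀ : 0 < t₀)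
    (ht : 0 < t) : ∫ x, energyDensityDeriv b D H x₀ t₀ (x, t) ≤ 0 := by
  have hint : ∀ i, Integrable fun x =>
      localizedStressDeriv D H x₀ t₀ (b i, 0) (0, 1) (b i, 0) (x, t) := fun i =>
    (continuous_spaceSlice (hU.continuousOn_localizedStressDeriv _ _ _)
      ht).integrable_of_hasCompactSupport <| .intro (isCompact_closedBall x₀ (3 * t₀))
        fun x hx => localizedStressDeriv_eq_zero ht₀ ht.le hx _ _ _
  have hint' : Integrable fun x => energyDensityDeriv b D H x₀ t₀ (x, t) :=
    (continuous_spaceSlice hU.continuousOn_energyDensityDeriv ht).integrable_of_hasCompactSupport <|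
      .intro (isCompact_closedBall x₀ (3 * t₀)) fun x hx => energyDensityDeriv_eq_zero ht₀ ht.le hx
  refine (integral_mono hint' ((integrable_finsetSum _ fun i _ => hint i).const_mul 2)
    (hU.energyDensityDeriv_le ht₀ ht)).trans_eq ?_
  rw [integral_const_mul, integral_finsetSum _ fun i _ => hint i]
  simp only [hU.integral_localizedStressDeriv_eq_zero ht₀ ht, Finset.sum_const_zero, mul_zero]

theorem antitoneOn_localEnergy (hU : IsDampedWave b U D H f g) (ht₀ : 0 < t₀) :
    AntitoneOn (localEnergy b D x₀ t₀) (Ici 0) := by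
  have hK := isCompact_closedBall x₀ (3 * t₀)
  have hderiv : ∀ t ∈ interior (Ici (0 : ℝ)), HasDerivAt (localEnergy b D x₀ t₀)
      (∫ x, energyDensityDeriv b D H x₀ t₀ (x, t)) t := fun t ht => by
    rw [interior_Ici] at ht
    have hsub : (univ : Set E) ×ˢ Ioo 0 (t + 1) ⊆ univ ×ˢ Ioi 0 :=
      prod_mono le_rfl Ioo_subset_Ioi_self
    exact hasDerivAt_integral_of_compact (G := fun x s => energyDensity b D x₀ t₀ (x, s))
      (G' := fun x s => energyDensityDeriv b D H x₀ t₀ (x, s)) hK ⟨ht, lt_add_one t⟩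
      (hU.continuousOn_energyDensity.mono (hsub.trans (prod_mono le_rfl Ioi_subset_Ici_self)))
      (hU.continuousOn_energyDensityDeriv.mono hsub)
      (fun x s hs => hU.hasDerivAt_energyDensity hs.1 x)
      fun x hx s hs => energyDensity_eq_zero ht₀ hs.1.le hx
  refine antitoneOn_of_deriv_nonpos (convex_Ici 0) ?_
    (fun t ht => (hderiv t ht).differentiableAt.differentiableWithinAt) fun t ht => ?_
  · exact continuousOn_integral_of_compact_support
      (f := fun t x => energyDensity b D x₀ t₀ (x, t)) hK
      (hU.continuousOn_energyDensity.comp (f := Prod.swap) continuous_swap.continuousOn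
        fun p hp => ⟨mem_univ _, hp.1⟩) fun t x ht hx => energyDensity_eq_zero ht₀ ht hx
  · rw [(hderiv t ht).deriv]
    exact hU.integral_energyDensityDeriv_nonpos ht₀ (by rwa [interior_Ici] at ht)

theorem energyDensity_eq_zero_of_localEnergy (hU : IsDampedWave b U D H f g) (ht₀ : 0 < t₀)
    (ht : 0 ≤ t) (henergy : localEnergy b D x₀ t₀ t = 0) (x : E) :
    energyDensity b D x₀ t₀ (x, t) = 0 := by
  have hcont : Continuous fun x => energyDensity b D x₀ t₀ (x, t) :=
    continuous_spaceSlice hU.continuousOn_energyDensity ht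
  have hint : Integrable fun x => energyDensity b D x₀ t₀ (x, t) :=
    hcont.integrable_of_hasCompactSupport <|
      .intro (isCompact_closedBall x₀ (3 * t₀)) fun x hx => energyDensity_eq_zero ht₀ ht hx
  have hae := (integral_eq_zero_iff_of_nonneg (fun _ => energyDensity_nonneg _) hint).1 henergy
  exact congrFun ((hcont.ae_eq_iff_eq volume continuous_zero).1 hae) x

theorem eq_zero_of_data_eq_zero (hU : IsDampedWave b U D H f g) (ht₀ : 0 < t₀)
    (hf : ∀ x ∈ closedBall x₀ (3 * t₀), f =ᶠ[𝓝 x] 0)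
    (hg : ∀ x ∈ closedBall x₀ (3 * t₀), g x = 0) : U (x₀, t₀) = 0 := by
  have hinit : localEnergy b D x₀ t₀ 0 = 0 := integral_eq_zero_of_ae <| ae_of_all _ fun x => by
    by_cases hx : x ∈ closedBall x₀ (3 * t₀)
    · exact hU.energyDensity_initial_eq_zero (hf x hx) (hg x hx)
    · exact energyDensity_eq_zero ht₀ le_rfl hx
  have henergy : ∀ t, 0 ≤ t → localEnergy b D x₀ t₀ t = 0 := fun t ht =>
    le_antisymm (hinit ▸ hU.antitoneOn_localEnergy ht₀ self_mem_Ici ht ht)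
      (integral_nonneg fun _ => energyDensity_nonneg _)
  obtain ⟨s, hs, hslope⟩ := exists_hasDerivAt_eq_slope (fun s => U (x₀, s))
    (fun s => D (x₀, s) (0, 1)) ht₀
    (hU.continuousOn.comp (f := fun s : ℝ => (x₀, s)) (by fun_prop) fun s hs => ⟨mem_univ _, hs.1⟩)
    fun s hs => hasDerivAt_timeSlice (hU.hasFDerivAt (x₀, s) hs.1)
  rw [timeDeriv_eq_zero_of_energyDensity ht₀ hs.2.le <| hU.energyDensity_eq_zero_of_localEnergy ht₀
    hs.1.le (henergy s hs.1.le) x₀, eq_comm, div_eq_zero_iff, sub_zero, or_iff_left ht₀.ne',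
    sub_eq_zero] at hslope
  rw [hslope, hU.initial, (hf x₀ (mem_closedBall_self (by positivity))).eq_of_nhds, Pi.zero_apply]

theorem eq_zero_of_far (hU : IsDampedWave b U D H f g) (hf : tsupport f ⊆ closedBall 0 R)
    (hg : tsupport g ⊆ closedBall 0 R) {p : E × ℝ} (hp : 0 ≤ p.2) (hfar : R + 3 * p.2 < ‖p.1‖) :
    U p = 0 := by
  have notMem : ∀ {v : E → ℝ}, tsupport v ⊆ closedBall 0 R →
      ∀ x ∈ closedBall p.1 (3 * p.2), x ∉ tsupport v := fun hv x hx hmem => by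
    have hx' := norm_sub_norm_le p.1 x
    rw [mem_closedBall_iff_norm'] at hx
    linarith [mem_closedBall_zero_iff.1 (hv hmem)]
  rcases hp.eq_or_lt with h0 | hpos
  · rw [show p = (p.1, 0) from Prod.ext rfl h0.symm, hU.initial]
    exact image_eq_zero_of_notMem_tsupport (notMem hf p.1 (mem_closedBall_self (by linarith)))
  · exact hU.eq_zero_of_data_eq_zero hpos
      (fun x hx => notMem_tsupport_iff_eventuallyEq.1 (notMem hf x hx))
      fun x hx => image_eq_zero_of_notMem_tsupport (notMem hg x hx)

theorem fderiv_eq_zero_of_far (hU : IsDampedWave b U D H f g) (hf : tsupport f ⊆ closedBall 0 R)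
    (hg : tsupport g ⊆ closedBall 0 R) {p : E × ℝ} (hp : 0 < p.2) (hfar : R + 3 * p.2 < ‖p.1‖) :
    D p = 0 :=
  (hU.hasFDerivAt p hp).unique <| (hasFDerivAt_const 0 p).congr_of_eventuallyEq <| by
    filter_upwards [eventually_far hp hfar] with q hq
    exact hU.eq_zero_of_far hf hg hq.1.le hq.2

theorem timeDeriv_eq_zero_of_far (hU : IsDampedWave b U D H f g) (hf : tsupport f ⊆ closedBall 0 R)
    (hg : tsupport g ⊆ closedBall 0 R) {p : E × ℝ} (hp : 0 ≤ p.2) (hfar : R + 3 * p.2 < ‖p.1‖) :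
    D p (0, 1) = 0 := by
  rcases hp.eq_or_lt with h0 | hpos
  · rw [show p = (p.1, 0) from Prod.ext rfl h0.symm, hU.initial_time]
    refine image_eq_zero_of_notMem_tsupport fun hmem => ?_
    linarith [mem_closedBall_zero_iff.1 (hg hmem)]
  · rw [hU.fderiv_eq_zero_of_far hf hg hpos hfar, zero_apply]

theorem hess_eq_zero_of_far (hU : IsDampedWave b U D H f g) (hf : tsupport f ⊆ closedBall 0 R)
    (hg : tsupport g ⊆ closedBall 0 R) {p : E × ℝ} (hp : 0 < p.2) (hfar : R + 3 * p.2 < ‖p.1‖) :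
    H p = 0 :=
  (hU.hasFDerivAt_fderiv p hp).unique <| (hasFDerivAt_const 0 p).congr_of_eventuallyEq <| by
    filter_upwards [eventually_far hp hfar] with q hq
    exact hU.fderiv_eq_zero_of_far hf hg hq.1 hq.2

end IsDampedWave

end FinitePropagation

end DomainOfDependence

section FourierTransform

open scoped FourierTransform RealInnerProductSpace
open Complex (I)

variable {E F : Type*} [NormedAddCommGroup E] [InnerProductSpace ℝ E] [FiniteDimensional ℝ E]
  [MeasurableSpace E] [BorelSpace E] [NormedAddCommGroup F] [NormedSpace ℂ F]

theorem fourier_fderiv_apply {v : E → F} {v' : E → E →L[ℝ] F} (hv : ∀ x, HasFDerivAt v (v' x) x)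
    (hv' : Continuous v') (hsupp : HasCompactSupport v) (w ξ : E) :
    𝓕 (fun x => v' x w) ξ = (2 * π * I * ⟪w, ξ⟫) • 𝓕 v ξ := by
  obtain rfl : v' = fderiv ℝ v := funext fun x => (hv x).fderiv.symm
  have hcont : Continuous v := continuous_iff_continuousAt.2 fun x => (hv x).continuousAt
  have hint' := hv'.integrable_of_hasCompactSupport (μ := volume) (hsupp.fderiv ℝ)
  rw [← Real.fourier_continuousLinearMap_apply hint',
    Real.fourier_fderiv (hcont.integrable_of_hasCompactSupport hsupp)
      (fun x => (hv x).differentiableAt) hint']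
  rw [VectorFourier.fourierSMulRight_apply, ← Complex.coe_smul, smul_smul,
    real_inner_comm]
  simp only [neg_apply, Complex.ofReal_neg, mul_neg, neg_mul, neg_neg]
  rfl

theorem hasDerivAt_fourier_of_compact {G G' : E → ℝ → F} {K : Set E} (hK : IsCompact K) {a b t : ℝ}
    (ht : t ∈ Ioo a b) (hG : ContinuousOn (Function.uncurry G) (univ ×ˢ Ioo a b))
    (hG' : ContinuousOn (Function.uncurry G') (univ ×ˢ Ioo a b))
    (hderiv : ∀ x, ∀ s ∈ Ioo a b, HasDerivAt (G x) (G' x s) s)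
    (hzero : ∀ x ∉ K, ∀ s ∈ Ioo a b, G x s = 0) (ξ : E) :
    HasDerivAt (fun s => 𝓕 (fun x => G x s) ξ) (𝓕 (fun x => G' x t) ξ) t := by
  have hchar : Continuous fun p : E × ℝ => 𝐞 (-⟪p.1, ξ⟫) := by fun_prop
  simp only [Real.fourier_eq]
  exact hasDerivAt_integral_of_compact (G := fun x s => 𝐞 (-⟪x, ξ⟫) • G x s)
    (G' := fun x s => 𝐞 (-⟪x, ξ⟫) • G' x s) hK ht (hchar.continuousOn.smul hG)
    (hchar.continuousOn.smul hG') (fun x s hs => (hderiv x s hs).const_smul _)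
    fun x hx s hs => by rw [hzero x hx s hs, smul_zero]

theorem continuousOn_fourier_of_compact {G : E → ℝ → F} {K : Set E} (hK : IsCompact K) {s : Set ℝ}
    (hG : ContinuousOn (Function.uncurry G) (univ ×ˢ s)) (hzero : ∀ x ∉ K, ∀ t ∈ s, G x t = 0)
    (ξ : E) : ContinuousOn (fun t => 𝓕 (fun x => G x t) ξ) s := by
  simp only [Real.fourier_eq]
  refine continuousOn_integral_of_compact_support (f := fun t x => 𝐞 (-⟪x, ξ⟫) • G x t) hK ?_
    fun t x ht hx => by rw [hzero x hx t ht, smul_zero]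
  exact (by fun_prop : Continuous fun p : ℝ × E => 𝐞 (-⟪p.2, ξ⟫)).continuousOn.smul <|
    hG.comp (f := Prod.swap) continuous_swap.continuousOn fun p hp => ⟨mem_univ _, hp.1⟩

/-- `y` solves the damped oscillator equation `y'' + y' + k y = 0` on `(0, ∞)`, with derivative `z`,
both being continuous up to time `0`. -/
structure IsDampedOscillator {F : Type*} [NormedAddCommGroup F] [NormedSpace ℝ F] (k : ℝ)
    (y z : ℝ → F) : Prop where
  continuousOn : ContinuousOn y (Ici 0)
  continuousOn_deriv : ContinuousOn z (Ici 0)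
  hasDerivAt : ∀ t, 0 < t → HasDerivAt y (z t) t
  hasDerivAt_deriv : ∀ t, 0 < t → HasDerivAt z (-(k • y t) - z t) t

/-- The Fourier transform in the space variable of the slice of `Φ` at time `t`. -/
def spatialFourier (Φ : E × ℝ → ℝ) (ξ : E) (t : ℝ) : ℂ :=
  𝓕 (fun x => (Φ (x, t) : ℂ)) ξ

section TimeRegularity

variable {Φ Φ' : E × ℝ → ℝ} {R : ℝ}

theorem hasDerivAt_spatialFourier (hΦ : ContinuousOn Φ (univ ×ˢ Ioi 0))
    (hΦ' : ContinuousOn Φ' (univ ×ˢ Ioi 0))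
    (hderiv : ∀ x t, 0 < t → HasDerivAt (fun s => Φ (x, s)) (Φ' (x, t)) t)
    (hzero : ∀ p : E × ℝ, 0 < p.2 → R + 3 * p.2 < ‖p.1‖ → Φ p = 0) (ξ : E) {t : ℝ} (ht : 0 < t) :
    HasDerivAt (spatialFourier Φ ξ) (spatialFourier Φ' ξ t) t := by
  have hsub : (univ : Set E) ×ˢ Ioo 0 (t + 1) ⊆ univ ×ˢ Ioi 0 :=
    prod_mono le_rfl Ioo_subset_Ioi_self
  refine hasDerivAt_fourier_of_compact (G := fun x s => (Φ (x, s) : ℂ))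
    (G' := fun x s => (Φ' (x, s) : ℂ)) (isCompact_closedBall (0 : E) (R + 3 * (t + 1)))
    ⟨ht, lt_add_one t⟩ (Complex.continuous_ofReal.comp_continuousOn (hΦ.mono hsub))
    (Complex.continuous_ofReal.comp_continuousOn (hΦ'.mono hsub))
    (fun x s hs => (hderiv x s hs.1).ofReal_comp) (fun x hx s hs => ?_) ξ
  rw [mem_closedBall_zero_iff, not_le] at hx
  rw [hzero (x, s) hs.1 (by linarith [hs.2]), Complex.ofReal_zero]

theorem continuousOn_spatialFourier (hΦ : ContinuousOn Φ (univ ×ˢ Ici 0))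
    (hzero : ∀ p : E × ℝ, 0 ≤ p.2 → R + 3 * p.2 < ‖p.1‖ → Φ p = 0) (ξ : E) :
    ContinuousOn (spatialFourier Φ ξ) (Ici 0) := fun t ht => by
  have hIcc : ContinuousOn (spatialFourier Φ ξ) (Icc 0 (t + 1)) := by
    refine continuousOn_fourier_of_compact (G := fun x s => (Φ (x, s) : ℂ))
      (isCompact_closedBall (0 : E) (R + 3 * (t + 1))) (Complex.continuous_ofReal.comp_continuousOn
        (hΦ.mono (prod_mono le_rfl Icc_subset_Ici_self))) (fun x hx s hs => ?_) ξ
    rw [mem_closedBall_zero_iff, not_le] at hx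
    rw [hzero (x, s) hs.1 (by linarith [hs.2]), Complex.ofReal_zero]
  refine (hIcc t ⟨ht, by linarith⟩).mono_of_mem_nhdsWithin ?_
  rw [← Ici_inter_Iic]
  exact inter_mem_nhdsWithin _ (Iic_mem_nhds (lt_add_one t))

theorem spatialFourier_fderiv_apply {Φ' : E × ℝ → E × ℝ →L[ℝ] ℝ} {t : ℝ}
    (hΦ : ∀ x, HasFDerivAt Φ (Φ' (x, t)) (x, t)) (hΦ' : Continuous fun x => Φ' (x, t))
    (hzero : ∀ x, R < ‖x‖ → Φ (x, t) = 0) (v ξ : E) :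
    spatialFourier (fun p => Φ' p (v, 0)) ξ t = 2 * π * I * ⟪v, ξ⟫ * spatialFourier Φ ξ t := by
  have hderiv : ∀ x, HasFDerivAt (fun x => (Φ (x, t) : ℂ))
      (Complex.ofRealCLM.comp ((Φ' (x, t)).comp (.inl ℝ E ℝ))) x := fun x =>
    Complex.ofRealCLM.hasFDerivAt.comp x <|
      (hΦ x).comp (f := fun z => (z, t)) x (hasFDerivAt_prodMk_left x t)
  refine fourier_fderiv_apply hderiv (continuous_const.clm_comp (hΦ'.clm_comp continuous_const))
    (.intro (isCompact_closedBall 0 R) fun x hx => ?_) v ξ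
  rw [mem_closedBall_zero_iff, not_le] at hx
  rw [hzero x hx, Complex.ofReal_zero]

end TimeRegularity

namespace IsDampedWave

variable {ι : Type*} [Fintype ι] {b : OrthonormalBasis ι ℝ E} {U : E × ℝ → ℝ}
  {D : E × ℝ → (E × ℝ →L[ℝ] ℝ)} {H : E × ℝ → (E × ℝ →L[ℝ] E × ℝ →L[ℝ] ℝ)} {f g : E → ℝ} {t R : ℝ}

theorem spatialFourier_fderiv (hU : IsDampedWave b U D H f g) (hf : tsupport f ⊆ closedBall 0 R)
    (hg : tsupport g ⊆ closedBall 0 R) (ht : 0 < t) (v ξ : E) :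
    spatialFourier (fun p => D p (v, 0)) ξ t = 2 * π * I * ⟪v, ξ⟫ * spatialFourier U ξ t :=
  spatialFourier_fderiv_apply (R := R + 3 * t) (fun x => hU.hasFDerivAt (x, t) ht)
    (continuous_spaceSlice hU.continuousOn_fderiv ht.le)
    (fun x hx => hU.eq_zero_of_far (p := (x, t)) hf hg ht.le hx) v ξ

theorem spatialFourier_hess (hU : IsDampedWave b U D H f g) (hf : tsupport f ⊆ closedBall 0 R)
    (hg : tsupport g ⊆ closedBall 0 R) (ht : 0 < t) (v ξ : E) :
    spatialFourier (fun p => H p (v, 0) (v, 0)) ξ t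
      = -(4 * π ^ 2 * ⟪v, ξ⟫ ^ 2) * spatialFourier U ξ t := by
  have hderiv := spatialFourier_fderiv_apply (Φ := fun p => D p (v, 0))
    (Φ' := fun p => (H p).flip (v, 0)) (R := R + 3 * t)
    (fun x => hU.hasFDerivAt_fderiv_apply (p := (x, t)) ht (v, 0))
    (((ContinuousLinearMap.flipₗᵢ ℝ (E × ℝ) (E × ℝ) ℝ).continuous.comp
      (continuous_spaceSlice hU.continuousOn_hess ht)).clm_apply continuous_const)
    (fun x hx => by rw [hU.fderiv_eq_zero_of_far hf hg (p := (x, t)) ht hx, zero_apply]) v ξ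
  rw [hU.spatialFourier_fderiv hf hg ht] at hderiv
  simp only [ContinuousLinearMap.flip_apply] at hderiv
  rw [hderiv]
  linear_combination 4 * π ^ 2 * ⟪v, ξ⟫ ^ 2 * spatialFourier U ξ t * Complex.I_sq

theorem spatialFourier_hess_time (hU : IsDampedWave b U D H f g) (hf : tsupport f ⊆ closedBall 0 R)
    (hg : tsupport g ⊆ closedBall 0 R) (ht : 0 < t) (ξ : E) :
    spatialFourier (fun p => H p (0, 1) (0, 1)) ξ t
      = -((4 * π ^ 2 * ‖ξ‖ ^ 2 : ℝ) • spatialFourier U ξ t)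
        - spatialFourier (fun p => D p (0, 1)) ξ t := by
  have hint : ∀ {a : E → ℝ}, Continuous a → (∀ x, R + 3 * t < ‖x‖ → a x = 0) →
      Integrable fun x => 𝐞 (-⟪x, ξ⟫) • (a x : ℂ) := fun {a} ha hzero =>
    Continuous.integrable_of_hasCompactSupport (by fun_prop) <|
      .intro (isCompact_closedBall 0 (R + 3 * t)) fun x hx => by
        rw [mem_closedBall_zero_iff, not_le] at hx
        rw [hzero x hx, Complex.ofReal_zero, smul_zero]
  have hhess : ∀ v, Integrable fun x => 𝐞 (-⟪x, ξ⟫) • (H (x, t) v v : ℂ) := fun v =>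
    hint (continuous_spaceSlice (hU.continuousOn_hess_apply v v) ht) fun x hx => by
      rw [hU.hess_eq_zero_of_far hf hg (p := (x, t)) ht hx, zero_apply, zero_apply]
  have hfderiv : Integrable fun x => 𝐞 (-⟪x, ξ⟫) • (D (x, t) (0, 1) : ℂ) :=
    hint (continuous_spaceSlice (hU.continuousOn_fderiv_apply _) ht.le) fun x hx =>
      hU.timeDeriv_eq_zero_of_far hf hg (p := (x, t)) ht.le hx
  have hequation : spatialFourier (fun p => H p (0, 1) (0, 1)) ξ t
      = ∑ i, spatialFourier (fun p => H p (b i, 0) (b i, 0)) ξ t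
        - spatialFourier (fun p => D p (0, 1)) ξ t := by
    simp only [spatialFourier, Real.fourier_eq]
    rw [← integral_finsetSum _ fun i _ => hhess (b i, 0),
      ← integral_sub (integrable_finsetSum _ fun i _ => hhess (b i, 0)) hfderiv]
    refine integral_congr_ae (.of_forall fun x => ?_)
    simp only [← Finset.smul_sum, ← smul_sub]
    rw [show H (x, t) (0, 1) (0, 1) = ∑ i, H (x, t) (b i, 0) (b i, 0) - D (x, t) (0, 1) by
      linarith [hU.equation (x, t) ht]]
    push_cast
    rfl
  rw [hequation, ← b.sum_sq_inner_right ξ, Complex.real_smul, Finset.mul_sum]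
  simp only [hU.spatialFourier_hess hf hg ht, ← Finset.sum_mul, Finset.sum_neg_distrib]
  push_cast
  ring

theorem isDampedOscillator_spatialFourier (hU : IsDampedWave b U D H f g)
    (hf : tsupport f ⊆ closedBall 0 R) (hg : tsupport g ⊆ closedBall 0 R) (ξ : E) :
    IsDampedOscillator (4 * π ^ 2 * ‖ξ‖ ^ 2) (spatialFourier U ξ)
      (spatialFourier (fun p => D p (0, 1)) ξ) where
  continuousOn := continuousOn_spatialFourier hU.continuousOn
    (fun _ hp hfar => hU.eq_zero_of_far hf hg hp hfar) ξ
  continuousOn_deriv := continuousOn_spatialFourier (hU.continuousOn_fderiv_apply _)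
    (fun _ hp hfar => hU.timeDeriv_eq_zero_of_far hf hg hp hfar) ξ
  hasDerivAt _ ht := hasDerivAt_spatialFourier
    (hU.continuousOn.mono (prod_mono le_rfl Ioi_subset_Ici_self))
    ((hU.continuousOn_fderiv_apply _).mono (prod_mono le_rfl Ioi_subset_Ici_self))
    (fun x s hs => hasDerivAt_timeSlice (hU.hasFDerivAt (x, s) hs))
    (fun _ hp hfar => hU.eq_zero_of_far hf hg hp.le hfar) ξ ht
  hasDerivAt_deriv _ ht := hU.spatialFourier_hess_time hf hg ht ξ ▸ hasDerivAt_spatialFourier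
    ((hU.continuousOn_fderiv_apply _).mono (prod_mono le_rfl Ioi_subset_Ici_self))
    (hU.continuousOn_hess_apply _ _)
    (fun x s hs => hasDerivAt_timeSlice (hU.hasFDerivAt_fderiv_apply (p := (x, s)) hs _))
    (fun _ hp hfar => hU.timeDeriv_eq_zero_of_far hf hg hp.le hfar) ξ ht

end IsDampedWave

end FourierTransform

section DampedOscillator

open scoped RealInnerProductSpace

variable {k t : ℝ}

/-- The decay rate of the slow mode of `y'' + y' + k y = 0`, that is the smaller root of
`r ^ 2 - r + k`. It is meaningful for `k ≤ 1 / 4`; the other root is `1 - slowRate k`. -/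
def slowRate (k : ℝ) : ℝ := 1 / 2 - √(1 / 4 - k)

theorem slowRate_mul_one_sub (hk : k ≤ 1 / 4) : slowRate k * (1 - slowRate k) = k := by
  unfold slowRate
  linear_combination -Real.sq_sqrt (sub_nonneg.2 hk)

theorem slowRate_nonneg (hk : 0 ≤ k) : 0 ≤ slowRate k :=
  sub_nonneg.2 <| (Real.sqrt_le_left (by norm_num)).2 (by linarith)

theorem slowRate_le_quarter (hk : k ≤ 3 / 16) : slowRate k ≤ 1 / 4 := by
  have hsqrt : 1 / 4 ≤ √(1 / 4 - k) := Real.le_sqrt_of_sq_le (by linarith)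
  unfold slowRate
  linarith

theorem le_slowRate (hk : k ≤ 1 / 4) : k ≤ slowRate k := by
  linarith [slowRate_mul_one_sub hk, sq_nonneg (slowRate k)]

theorem slowRate_le (hk : 0 ≤ k) (hk' : k ≤ 3 / 16) : slowRate k ≤ 4 / 3 * k := by
  nlinarith [slowRate_mul_one_sub (by linarith : k ≤ 1 / 4), slowRate_nonneg hk,
    slowRate_le_quarter hk']

/-- The coefficient of the slow mode in the solution of `y'' + y' + k y = 0`, set to `0` for
`k > 3 / 16`, where every mode decays exponentially in time at a uniform rate. -/
def slowWeight (k t : ℝ) : ℝ :=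
  if k ≤ 3 / 16 then exp (-(slowRate k * t)) / (1 - 2 * slowRate k) else 0

theorem slowWeight_of_le (hk : k ≤ 3 / 16) :
    slowWeight k t = exp (-(slowRate k * t)) / (1 - 2 * slowRate k) := if_pos hk

theorem slowWeight_of_gt (hk : 3 / 16 < k) : slowWeight k t = 0 := if_neg hk.not_ge

theorem slowWeight_nonneg (k t : ℝ) : 0 ≤ slowWeight k t := by
  rcases le_or_gt k (3 / 16) with hk | hk
  · rw [slowWeight_of_le hk]
    exact div_nonneg (exp_pos _).le (by linarith [slowRate_le_quarter hk])
  · exact (slowWeight_of_gt hk).ge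

theorem slowWeight_le (k : ℝ) (ht : 0 ≤ t) : slowWeight k t ≤ 2 * exp (-(k * t)) := by
  rcases le_or_gt k (3 / 16) with hk | hk
  · have hr := slowRate_le_quarter hk
    rw [slowWeight_of_le hk, div_le_iff₀ (by linarith)]
    calc exp (-(slowRate k * t)) ≤ exp (-(k * t)) := by
          gcongr
          exact le_slowRate (by linarith)
      _ ≤ 2 * exp (-(k * t)) * (1 - 2 * slowRate k) := by nlinarith [exp_pos (-(k * t))]
  · rw [slowWeight_of_gt hk]
    positivity

theorem le_slowWeight (hk : 0 ≤ k) (hk' : k ≤ 3 / 16) (ht : 0 ≤ t) :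
    exp (-(4 / 3 * k * t)) ≤ slowWeight k t := by
  have hr := slowRate_le_quarter hk'
  rw [slowWeight_of_le hk', le_div_iff₀ (by linarith)]
  calc exp (-(4 / 3 * k * t)) * (1 - 2 * slowRate k) ≤ exp (-(4 / 3 * k * t)) :=
        mul_le_of_le_one_right (exp_pos _).le (by linarith [slowRate_nonneg hk])
    _ ≤ exp (-(slowRate k * t)) := by
        gcongr
        exact slowRate_le hk hk'

theorem measurable_slowWeight (t : ℝ) : Measurable fun k => slowWeight k t := by
  unfold slowWeight slowRate
  exact Measurable.ite measurableSet_Iic (by fun_prop) measurable_const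

theorem eq_exp_smul_of_hasDerivAt {F : Type*} [NormedAddCommGroup F] [NormedSpace ℝ F] {w : ℝ → F}
    {c : ℝ} (hcont : ContinuousOn w (Ici 0)) (hderiv : ∀ s, 0 < s → HasDerivAt w (-(c • w s)) s)
    (ht : 0 < t) : w t = exp (-(c * t)) • w 0 := by
  have hexp : ∀ s, HasDerivAt (fun s => exp (c * s)) (exp (c * s) * c) s := fun s => by
    simpa using ((hasDerivAt_id s).const_mul c).exp
  have hderiv_zero : ∀ s, 0 < s → HasDerivAt (fun s => exp (c * s) • w s) 0 s := fun s hs =>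
    ((hexp s).smul (hderiv s hs)).congr_deriv (by rw [smul_neg, smul_smul, neg_add_cancel])
  have hconst : EqOn (fun s => exp (c * s) • w s) (fun _ => exp (c * t) • w t) (Ioi 0) :=
    fun s hs => isOpen_Ioi.is_const_of_deriv_eq_zero isPreconnected_Ioi
      (fun r hr => (hderiv_zero r hr).differentiableAt.differentiableWithinAt)
      (fun r hr => (hderiv_zero r hr).deriv) hs ht
  have hzero : exp (c * 0) • w 0 = exp (c * t) • w t :=
    hconst.of_subset_closure (by fun_prop) continuousOn_const Ioi_subset_Ici_self
      (closure_Ioi (0 : ℝ)).ge self_mem_Ici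
  rw [mul_zero, Real.exp_zero, one_smul] at hzero
  rw [hzero, smul_smul, ← Real.exp_add, neg_add_cancel, Real.exp_zero, one_smul]

namespace IsDampedOscillator

section NormedSpace

variable {F : Type*} [NormedAddCommGroup F] [NormedSpace ℝ F] {y z : ℝ → F}

theorem map {G : Type*} [NormedAddCommGroup G] [NormedSpace ℝ G] (h : IsDampedOscillator k y z)
    (L : F →L[ℝ] G) : IsDampedOscillator k (fun t => L (y t)) (fun t => L (z t)) where
  continuousOn := L.continuous.comp_continuousOn h.continuousOn
  continuousOn_deriv := L.continuous.comp_continuousOn h.continuousOn_deriv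
  hasDerivAt t ht := L.hasFDerivAt.comp_hasDerivAt t (h.hasDerivAt t ht)
  hasDerivAt_deriv t ht :=
    (L.hasFDerivAt.comp_hasDerivAt t (h.hasDerivAt_deriv t ht)).congr_deriv
      (by simp only [map_sub, map_neg, map_smul])

theorem deriv_add_smul_eq (h : IsDampedOscillator k y z) {r s : ℝ} (hrs : r + s = 1)
    (hk : r * s = k) (ht : 0 < t) : z t + s • y t = exp (-(r * t)) • (z 0 + s • y 0) := by
  refine eq_exp_smul_of_hasDerivAt (w := fun t => z t + s • y t)
    (h.continuousOn_deriv.add (h.continuousOn.const_smul s)) (fun τ hτ => ?_) ht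
  refine ((h.hasDerivAt_deriv τ hτ).add ((h.hasDerivAt τ hτ).const_smul s)).congr_deriv ?_
  rw [← hk, eq_sub_of_add_eq' hrs]
  module

theorem sub_slowWeight_smul_eq (h : IsDampedOscillator k y z) (hk : k ≤ 3 / 16) (ht : 0 < t) :
    y t - slowWeight k t • (z 0 + (1 - slowRate k) • y 0)
      = -(exp (-((1 - slowRate k) * t)) / (1 - 2 * slowRate k)) • (z 0 + slowRate k • y 0) := by
  have hroots := slowRate_mul_one_sub (by linarith : k ≤ 1 / 4)
  have hne : 1 - 2 * slowRate k ≠ 0 := by linarith [slowRate_le_quarter hk]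
  have hslow := h.deriv_add_smul_eq (add_sub_cancel _ 1) hroots ht
  have hfast := h.deriv_add_smul_eq (sub_add_cancel 1 _) ((mul_comm _ _).trans hroots) ht
  have hy : y t = (1 - 2 * slowRate k)⁻¹ •
      ((z t + (1 - slowRate k) • y t) - (z t + slowRate k • y t)) := by
    rw [eq_inv_smul_iff₀ hne]
    module
  rw [hy, hslow, hfast, slowWeight_of_le hk]
  module

theorem norm_sub_slowWeight_smul_le_of_low (h : IsDampedOscillator k y z) (hk₀ : 0 ≤ k)
    (hk : k ≤ 3 / 16) (ht : 0 < t) :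
    ‖y t - slowWeight k t • (z 0 + (1 - slowRate k) • y 0)‖
      ≤ 2 * (‖y 0‖ + ‖z 0‖) * exp (-(t / 16)) := by
  have hr₀ := slowRate_nonneg hk₀
  have hr := slowRate_le_quarter hk
  have hfactor : exp (-((1 - slowRate k) * t)) / (1 - 2 * slowRate k) ≤ 2 * exp (-(t / 16)) := by
    rw [div_le_iff₀ (by linarith)]
    have : exp (-((1 - slowRate k) * t)) ≤ exp (-(t / 16)) := exp_le_exp.2 (by nlinarith)
    nlinarith [exp_pos (-(t / 16))]
  have hdata : ‖z 0 + slowRate k • y 0‖ ≤ ‖y 0‖ + ‖z 0‖ :=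
    calc ‖z 0 + slowRate k • y 0‖ ≤ ‖z 0‖ + slowRate k * ‖y 0‖ := by
          simpa only [norm_smul, Real.norm_of_nonneg hr₀] using norm_add_le (z 0) (slowRate k • y 0)
      _ ≤ ‖y 0‖ + ‖z 0‖ := by nlinarith [norm_nonneg (y 0)]
  rw [h.sub_slowWeight_smul_eq hk ht, neg_smul, norm_neg, norm_smul,
    Real.norm_of_nonneg (div_nonneg (exp_pos _).le (by linarith)), mul_right_comm]
  gcongr

end NormedSpace

section InnerProductSpace

variable {F : Type*} [NormedAddCommGroup F] [InnerProductSpace ℝ F] {y z : ℝ → F}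

/-- The energy `‖z‖ ^ 2 + k ‖y‖ ^ 2` of a damped oscillator, corrected by a cross term which makes
it decay exponentially. -/
def correctedEnergy (k : ℝ) (y z : F) : ℝ := ‖z‖ ^ 2 + k * ‖y‖ ^ 2 + 1 / 4 * ⟪y, z⟫

theorem norm_sq_le_correctedEnergy (hk : 3 / 16 ≤ k) (y z : F) :
    1 / 6 * ‖y‖ ^ 2 ≤ correctedEnergy k y z := by
  have hinner := (abs_le.1 (abs_real_inner_le_norm y z)).1
  unfold correctedEnergy
  nlinarith [sq_nonneg (‖z‖ - 1 / 8 * ‖y‖), mul_nonneg (sub_nonneg.2 hk) (sq_nonneg ‖y‖),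
    sq_nonneg ‖y‖]

theorem correctedEnergy_le (hk : 0 ≤ k) (y z : F) :
    correctedEnergy k y z ≤ 2 * (‖z‖ ^ 2 + (1 + k) * ‖y‖ ^ 2) := by
  have hinner := real_inner_le_norm y z
  unfold correctedEnergy
  nlinarith [sq_nonneg (‖y‖ - ‖z‖), sq_nonneg ‖y‖, sq_nonneg ‖z‖,
    mul_nonneg hk (sq_nonneg ‖y‖)]

theorem hasDerivAt_correctedEnergy (h : IsDampedOscillator k y z) (ht : 0 < t) :
    HasDerivAt (fun s => correctedEnergy k (y s) (z s))
      (-(7 / 4 * ‖z t‖ ^ 2) - 1 / 4 * k * ‖y t‖ ^ 2 - 1 / 4 * ⟪y t, z t⟫) t := by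
  have hy := h.hasDerivAt t ht
  have hz := h.hasDerivAt_deriv t ht
  refine ((hz.norm_sq.add (hy.norm_sq.const_mul k)).add
    ((hy.inner ℝ hz).const_mul (1 / 4))).congr_deriv ?_
  simp only [inner_sub_right, inner_neg_right, real_inner_smul_right, real_inner_self_eq_norm_sq,
    real_inner_comm (y t) (z t)]
  ring

theorem antitoneOn_exp_mul_correctedEnergy (h : IsDampedOscillator k y z) (hk : 3 / 16 ≤ k) :
    AntitoneOn (fun s => exp (s / 8) * correctedEnergy k (y s) (z s)) (Ici 0) := by
  have hderiv : ∀ s, 0 < s → HasDerivAt (fun s => exp (s / 8) * correctedEnergy k (y s) (z s))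
      (exp (s / 8) * (1 / 8) * correctedEnergy k (y s) (z s) + exp (s / 8) *
        (-(7 / 4 * ‖z s‖ ^ 2) - 1 / 4 * k * ‖y s‖ ^ 2 - 1 / 4 * ⟪y s, z s⟫)) s := fun s hs =>
    ((hasDerivAt_id s).div_const 8).exp.mul (h.hasDerivAt_correctedEnergy hs)
  have hcont : ContinuousOn (fun s => exp (s / 8) * correctedEnergy k (y s) (z s)) (Ici 0) := by
    have hy := h.continuousOn
    have hz := h.continuousOn_deriv
    unfold correctedEnergy
    fun_prop
  refine antitoneOn_of_deriv_nonpos (convex_Ici 0) hcont ?_ ?_ <;> rw [interior_Ici]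
  · exact fun s hs => (hderiv s hs).differentiableAt.differentiableWithinAt
  · intro s hs
    have hinner := (abs_le.1 (abs_real_inner_le_norm (y s) (z s))).1
    have hdissipation : 1 / 8 * correctedEnergy k (y s) (z s)
        + (-(7 / 4 * ‖z s‖ ^ 2) - 1 / 4 * k * ‖y s‖ ^ 2 - 1 / 4 * ⟪y s, z s⟫) ≤ 0 := by
      unfold correctedEnergy
      nlinarith [sq_nonneg (‖z s‖ - 1 / 14 * ‖y s‖), sq_nonneg ‖y s‖, sq_nonneg ‖z s‖,
        mul_nonneg (sub_nonneg.2 hk) (sq_nonneg ‖y s‖)]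
    rw [(hderiv s hs).deriv]
    nlinarith [exp_pos (s / 8)]

theorem norm_sq_le_of_high (h : IsDampedOscillator k y z) (hk : 3 / 16 ≤ k) (ht : 0 < t) :
    ‖y t‖ ^ 2 ≤ 12 * (‖z 0‖ ^ 2 + (1 + k) * ‖y 0‖ ^ 2) * exp (-(t / 8)) := by
  have hdecay := h.antitoneOn_exp_mul_correctedEnergy hk self_mem_Ici ht.le ht.le
  have hinitial := correctedEnergy_le (by linarith : 0 ≤ k) (y 0) (z 0)
  have hlower := mul_le_mul_of_nonneg_left (norm_sq_le_correctedEnergy hk (y t) (z t))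
    (exp_pos (t / 8)).le
  simp only [zero_div, Real.exp_zero, one_mul] at hdecay
  rw [Real.exp_neg, ← div_eq_mul_inv, le_div_iff₀ (exp_pos _)]
  linarith

theorem norm_le_of_high (h : IsDampedOscillator k y z) (hk : 3 / 16 ≤ k) (ht : 0 < t) :
    ‖y t‖ ≤ 4 * ((1 + k) * ‖y 0‖ + ‖z 0‖) * exp (-(t / 16)) := by
  have hexp : exp (-(t / 8)) = exp (-(t / 16)) ^ 2 := by
    rw [← Real.exp_nat_mul]
    ring_nf
  have hk₀ : 0 ≤ k := by linarith
  refine (sq_le_sq₀ (norm_nonneg _) (by positivity)).1 ((h.norm_sq_le_of_high hk ht).trans ?_)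
  rw [hexp, mul_pow _ (exp (-(t / 16)))]
  gcongr
  nlinarith [mul_nonneg hk₀ (sq_nonneg ‖y 0‖), sq_nonneg ‖z 0‖, sq_nonneg (k * ‖y 0‖),
    mul_nonneg (mul_nonneg (by linarith : 0 ≤ 1 + k) (norm_nonneg (y 0))) (norm_nonneg (z 0))]

theorem norm_sub_slowWeight_smul_le (h : IsDampedOscillator k y z) (hk : 0 ≤ k) (ht : 0 < t) :
    ‖y t - slowWeight k t • (z 0 + (1 - slowRate k) • y 0)‖
      ≤ 4 * ((1 + k) * ‖y 0‖ + ‖z 0‖) * exp (-(t / 16)) := by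
  rcases le_or_gt k (3 / 16) with hlow | hhigh
  · refine (h.norm_sub_slowWeight_smul_le_of_low hk hlow ht).trans ?_
    gcongr ?_ * _
    nlinarith [norm_nonneg (y 0), norm_nonneg (z 0), mul_nonneg hk (norm_nonneg (y 0))]
  · rw [slowWeight_of_gt hhigh, zero_smul, sub_zero]
    exact h.norm_le_of_high hhigh.le ht

theorem norm_le (h : IsDampedOscillator k y z) (hk : 0 ≤ k) (ht : 0 < t) :
    ‖y t‖ ≤ 6 * ((1 + k) * ‖y 0‖ + ‖z 0‖) := by
  have hweight : slowWeight k t ≤ 2 :=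
    (slowWeight_le k ht.le).trans
      (by linarith [Real.exp_le_one_iff.2 (by nlinarith : -(k * t) ≤ 0)])
  have hrate : |1 - slowRate k| ≤ 1 := by
    have := slowRate_nonneg hk
    have := Real.sqrt_nonneg (1 / 4 - k)
    unfold slowRate at *
    exact abs_le.2 ⟨by linarith, by linarith⟩
  have hslow : ‖slowWeight k t • (z 0 + (1 - slowRate k) • y 0)‖ ≤ 2 * (‖z 0‖ + 1 * ‖y 0‖) := by
    rw [norm_smul, Real.norm_of_nonneg (slowWeight_nonneg k t)]
    gcongr
    refine (norm_add_le _ _).trans ?_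
    rw [norm_smul, Real.norm_eq_abs]
    gcongr
  have hfast := h.norm_sub_slowWeight_smul_le hk ht
  have hexp : exp (-(t / 16)) ≤ 1 := Real.exp_le_one_iff.2 (by linarith)
  have hbound : 4 * ((1 + k) * ‖y 0‖ + ‖z 0‖) * exp (-(t / 16))
      ≤ 4 * ((1 + k) * ‖y 0‖ + ‖z 0‖) := mul_le_of_le_one_right (by positivity) hexp
  linarith [norm_le_norm_sub_add (y t) (slowWeight k t • (z 0 + (1 - slowRate k) • y 0)),
    mul_nonneg hk (norm_nonneg (y 0))]

end InnerProductSpace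

end IsDampedOscillator

end DampedOscillator

section SineTransform

open scoped FourierTransform RealInnerProductSpace
open Complex (I)

variable {E : Type*} [NormedAddCommGroup E] [InnerProductSpace ℝ E] {R : ℝ}

theorem abs_two_pi_inner_sub_le {y : E} (hy : ‖y‖ ≤ R) (x ξ : E) :
    |2 * π * ⟪x - y, ξ⟫| ≤ 2 * π * ((R + ‖x‖) * ‖ξ‖) := by
  rw [abs_mul, abs_of_pos Real.two_pi_pos]
  gcongr
  refine (abs_real_inner_le_norm _ _).trans ?_
  gcongr
  linarith [norm_sub_le x y]

variable [MeasurableSpace E] [BorelSpace E] [FiniteDimensional ℝ E] {v w : E → ℝ}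

/-- The sine transform of `v` centred at `x`. It represents the gradient at `x` of a function in
terms of its Fourier transform, and is odd in the frequency `ξ`. -/
def sineTransform (v : E → ℝ) (x ξ : E) : ℝ := ∫ y, v y * Real.sin (2 * π * ⟪x - y, ξ⟫)

/-- The first moment of `v` about `x`. -/
def firstMoment (v : E → ℝ) (x : E) : E := ∫ y, v y • (x - y)

theorem integrable_mul_sin (hv : Integrable v) (x ξ : E) :
    Integrable fun y => v y * Real.sin (2 * π * ⟪x - y, ξ⟫) :=
  hv.mul_bdd (Continuous.aestronglyMeasurable (by fun_prop))
    (ae_of_all _ fun y => Real.abs_sin_le_one _)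

theorem sineTransform_add (hv : Integrable v) (hw : Integrable w) (x ξ : E) :
    sineTransform (v + w) x ξ = sineTransform v x ξ + sineTransform w x ξ := by
  simp only [sineTransform, Pi.add_apply, add_mul]
  exact integral_add (integrable_mul_sin hv x ξ) (integrable_mul_sin hw x ξ)

theorem sineTransform_eq_im (hv : Integrable v) (x ξ : E) :
    sineTransform v x ξ
      = (Complex.exp (↑(2 * π * ⟪ξ, x⟫) * I) * 𝓕 (fun y => (v y : ℂ)) ξ).im := by
  have hint : Integrable fun y => Complex.exp (↑(2 * π * ⟪x - y, ξ⟫) * I) * (v y : ℂ) :=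
    hv.ofReal.bdd_mul (Continuous.aestronglyMeasurable (by fun_prop))
      (ae_of_all _ fun y => (Complex.norm_exp_ofReal_mul_I _).le)
  have him : sineTransform v x ξ
      = ∫ y, (Complex.exp (↑(2 * π * ⟪x - y, ξ⟫) * I) * (v y : ℂ)).im :=
    integral_congr_ae <| ae_of_all _ fun y => by
      simp only [Complex.im_mul_ofReal, Complex.exp_ofReal_mul_I_im, mul_comm (v y)]
  rw [him, Real.fourier_eq', ← integral_const_mul]
  refine (integral_im hint).trans
    (congrArg Complex.im (integral_congr_ae (ae_of_all _ fun y => ?_)))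
  simp only [smul_eq_mul, ← mul_assoc, ← Complex.exp_add, inner_sub_left, real_inner_comm x ξ]
  push_cast
  ring_nf

theorem abs_integral_mul_le {k : E → ℝ} {B : ℝ} (hv : Integrable v)
    (hsupp : tsupport v ⊆ closedBall 0 R) (hk : ∀ y, ‖y‖ ≤ R → |k y| ≤ B) :
    |∫ y, v y * k y| ≤ (∫ y, |v y|) * B := by
  rw [← integral_mul_const, ← Real.norm_eq_abs]
  refine norm_integral_le_of_norm_le (hv.abs.mul_const B) (ae_of_all _ fun y => ?_)
  rw [norm_mul, Real.norm_eq_abs, Real.norm_eq_abs]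
  by_cases hy : y ∈ tsupport v
  · gcongr
    exact hk y (mem_closedBall_zero_iff.1 (hsupp hy))
  · rw [image_eq_zero_of_notMem_tsupport hy, abs_zero, zero_mul, zero_mul]

theorem abs_sineTransform_le (hv : Integrable v) (hsupp : tsupport v ⊆ closedBall 0 R) (x ξ : E) :
    |sineTransform v x ξ| ≤ (∫ y, |v y|) * (2 * π * ((R + ‖x‖) * ‖ξ‖)) :=
  abs_integral_mul_le hv hsupp fun _ hy =>
    Real.abs_sin_le_abs.trans (abs_two_pi_inner_sub_le hy x ξ)

theorem integrable_smul_sub (hv : Continuous v) (hvc : HasCompactSupport v) (x : E) :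
    Integrable fun y => v y • (x - y) :=
  (Continuous.smul hv (by fun_prop)).integrable_of_hasCompactSupport hvc.smul_right

theorem abs_sineTransform_sub_le (hv : Continuous v) (hsupp : tsupport v ⊆ closedBall 0 R)
    (x ξ : E) :
    |sineTransform v x ξ - 2 * π * ⟪firstMoment v x, ξ⟫|
      ≤ (∫ y, |v y|) * ((2 * π * ((R + ‖x‖) * ‖ξ‖)) ^ 3 / 6) := by
  have hvc : HasCompactSupport v :=
    (isCompact_closedBall 0 R).of_isClosed_subset (isClosed_tsupport v) hsupp
  have hint := integrable_smul_sub hv hvc x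
  have hinner : ∀ y, v y * (2 * π * ⟪x - y, ξ⟫) = 2 * π * ⟪ξ, v y • (x - y)⟫ := fun y => by
    rw [real_inner_smul_right, real_inner_comm]
    ring
  have hlinear : 2 * π * ⟪firstMoment v x, ξ⟫ = ∫ y, v y * (2 * π * ⟪x - y, ξ⟫) := by
    simp only [hinner]
    rw [integral_const_mul, integral_inner hint, real_inner_comm, firstMoment]
  have hlinear_int : Integrable fun y => v y * (2 * π * ⟪x - y, ξ⟫) := by
    simpa only [hinner] using (hint.const_inner ξ).const_mul (2 * π)
  rw [hlinear, sineTransform,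
    ← integral_sub (integrable_mul_sin (hv.integrable_of_hasCompactSupport hvc) x ξ) hlinear_int]
  simp only [← mul_sub]
  refine abs_integral_mul_le (hv.integrable_of_hasCompactSupport hvc) hsupp fun y hy => ?_
  rw [abs_sub_comm]
  refine (Real.abs_sub_sin_le _).trans ?_
  gcongr
  exact abs_two_pi_inner_sub_le hy x ξ

end SineTransform

section FrequencyIntegrals

open scoped RealInnerProductSpace

variable {E : Type*} [NormedAddCommGroup E] {t : ℝ}

theorem slowWeight_le_exp_neg_mul_sq (ht : 0 ≤ t) (ξ : E) :
    slowWeight (4 * π ^ 2 * ‖ξ‖ ^ 2) t ≤ 2 * exp (-(4 * π ^ 2 * t * ‖ξ‖ ^ 2)) := by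
  rw [mul_right_comm _ t]
  exact slowWeight_le _ ht

theorem exp_neg_one_le_slowWeight (ht : 1 ≤ t) {ξ : E} (hξ : ξ ∈ closedBall 0 (1 / 16 / √t)) :
    exp (-1) ≤ slowWeight (4 * π ^ 2 * ‖ξ‖ ^ 2) t := by
  have hk₀ : 0 ≤ 4 * π ^ 2 * ‖ξ‖ ^ 2 := by positivity
  have hkt : 4 * π ^ 2 * ‖ξ‖ ^ 2 * t ≤ 3 / 16 :=
    calc 4 * π ^ 2 * ‖ξ‖ ^ 2 * t ≤ 4 * 10 * (1 / 16 / √t) ^ 2 * t := by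
          gcongr
          · nlinarith [Real.pi_lt_d2, Real.pi_pos]
          · exact mem_closedBall_zero_iff.1 hξ
      _ = 5 / 32 := by
          rw [div_pow, Real.sq_sqrt (by linarith)]
          field_simp
          norm_num
      _ ≤ 3 / 16 := by norm_num
  refine le_trans ?_ (le_slowWeight hk₀ (by nlinarith) (by linarith))
  gcongr
  linarith

variable [InnerProductSpace ℝ E] [FiniteDimensional ℝ E] [MeasurableSpace E] [BorelSpace E]

theorem le_setIntegral_inner_sq (w : E) {ρ : ℝ} (hρ : 0 < ρ) :
    (ρ / 4) ^ (Module.finrank ℝ E + 2) * volume.real (ball (0 : E) 1) * ‖w‖ ^ 2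
      ≤ ∫ ξ in closedBall (0 : E) ρ, ⟪w, ξ⟫ ^ 2 := by
  rcases eq_or_ne w 0 with rfl | hw
  · simp
  have : 0 < ‖w‖ := norm_pos_iff.2 hw
  let e : E := (ρ / 2 / ‖w‖) • w
  have he : ‖e‖ = ρ / 2 := by
    rw [norm_smul, Real.norm_of_nonneg (by positivity)]
    field_simp
  have hinner_e : ⟪w, e⟫ = ρ / 2 * ‖w‖ := by
    rw [real_inner_smul_right, real_inner_self_eq_norm_sq]
    field_simp
  have hinner : ∀ ξ ∈ closedBall e (ρ / 4), ρ / 4 * ‖w‖ ≤ ⟪w, ξ⟫ := fun ξ hξ => by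
    have hdist : ‖w‖ * ‖ξ - e‖ ≤ ‖w‖ * (ρ / 4) := by
      gcongr
      exact mem_closedBall_iff_norm.1 hξ
    have := (abs_le.1 (abs_real_inner_le_norm w (ξ - e))).1
    rw [inner_sub_right, hinner_e] at this
    linarith
  have hsub : closedBall e (ρ / 4) ⊆ closedBall 0 ρ := fun ξ hξ => mem_closedBall_zero_iff.2 <| by
    linarith [norm_le_norm_add_norm_sub' ξ e, mem_closedBall_iff_norm.1 hξ]
  have hint : IntegrableOn (fun ξ : E => ⟪w, ξ⟫ ^ 2) (closedBall 0 ρ) :=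
    (Continuous.continuousOn (by fun_prop)).integrableOn_compact (isCompact_closedBall 0 ρ)
  calc (ρ / 4) ^ (Module.finrank ℝ E + 2) * volume.real (ball (0 : E) 1) * ‖w‖ ^ 2
      = (ρ / 4 * ‖w‖) ^ 2 * volume.real (closedBall e (ρ / 4)) := by
        rw [Measure.addHaar_real_closedBall volume e (by positivity)]
        ring
    _ ≤ ∫ ξ in closedBall e (ρ / 4), ⟪w, ξ⟫ ^ 2 :=
        setIntegral_ge_of_const_le_real measurableSet_closedBall measure_closedBall_lt_top.ne
          (fun ξ hξ => pow_le_pow_left₀ (by positivity) (hinner ξ hξ) 2) (hint.mono_set hsub)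
    _ ≤ ∫ ξ in closedBall 0 ρ, ⟪w, ξ⟫ ^ 2 :=
        setIntegral_mono_set hint (ae_of_all _ fun ξ => sq_nonneg _) hsub.eventuallyLE

theorem integrable_norm_pow_mul_exp_neg (j : ℕ) {b : ℝ} (hb : 0 < b) :
    Integrable fun ξ : E => ‖ξ‖ ^ j * exp (-(b * ‖ξ‖ ^ 2)) := by
  have hgauss : Integrable fun ξ : E => exp (-(b / 2 * ‖ξ‖ ^ 2)) := by
    have := (GaussianFourier.integrable_cexp_neg_mul_sq_norm_add (V := E)
      (b := ↑(b / 2)) (by rw [Complex.ofReal_re]; positivity) 0 0).norm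
    refine this.congr (ae_of_all _ fun ξ => ?_)
    simp only [zero_mul, add_zero]
    rw [Complex.norm_exp]
    norm_cast
    rw [neg_mul]
  refine (hgauss.const_mul (j ! * exp (1 / (2 * b)))).mono' (by fun_prop)
    (ae_of_all _ fun ξ => ?_)
  have hpow : ‖ξ‖ ^ j ≤ j ! * exp ‖ξ‖ := by
    rw [← div_le_iff₀' (by positivity)]
    exact Real.pow_div_factorial_le_exp _ (norm_nonneg ξ) j
  have hyoung : ‖ξ‖ ≤ 1 / (2 * b) + b / 2 * ‖ξ‖ ^ 2 := by
    have hsq : 1 / (2 * b) + b / 2 * ‖ξ‖ ^ 2 - ‖ξ‖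
        = (1 - b * ‖ξ‖) ^ 2 / (2 * b) := by
      field_simp
      ring
    rw [← sub_nonneg, hsq]
    positivity
  rw [Real.norm_of_nonneg (by positivity)]
  calc ‖ξ‖ ^ j * exp (-(b * ‖ξ‖ ^ 2)) ≤ j ! * exp ‖ξ‖ * exp (-(b * ‖ξ‖ ^ 2)) := by gcongr
    _ = j ! * exp (‖ξ‖ - b * ‖ξ‖ ^ 2) := by rw [mul_assoc, ← Real.exp_add, sub_eq_add_neg]
    _ ≤ j ! * exp (1 / (2 * b) + -(b / 2 * ‖ξ‖ ^ 2)) := by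
        gcongr
        linarith
    _ = j ! * exp (1 / (2 * b)) * exp (-(b / 2 * ‖ξ‖ ^ 2)) := by
        rw [Real.exp_add, mul_assoc]

theorem sqrt_pow_mul_integral_norm_pow_mul_exp_neg (j : ℕ) (b : ℝ) (ht : 0 < t) :
    √t ^ (Module.finrank ℝ E + j) * ∫ ξ : E, ‖ξ‖ ^ j * exp (-(b * t * ‖ξ‖ ^ 2))
      = ∫ ξ : E, ‖ξ‖ ^ j * exp (-(b * ‖ξ‖ ^ 2)) := by
  have hsqrt : 0 < √t := Real.sqrt_pos.2 ht
  have hscale : ∀ ξ : E, ‖√t • ξ‖ ^ j * exp (-(b * ‖√t • ξ‖ ^ 2))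
      = √t ^ j * (‖ξ‖ ^ j * exp (-(b * t * ‖ξ‖ ^ 2))) := fun ξ => by
    rw [norm_smul, Real.norm_of_nonneg hsqrt.le, mul_pow, mul_pow, Real.sq_sqrt ht.le]
    ring_nf
  have hchange := Measure.integral_comp_smul volume
    (fun ξ : E => ‖ξ‖ ^ j * exp (-(b * ‖ξ‖ ^ 2))) √t
  simp only [hscale, integral_const_mul] at hchange
  rw [abs_of_pos (by positivity), smul_eq_mul, eq_inv_mul_iff_mul_eq₀ (by positivity)] at hchange
  rw [← hchange, pow_add, mul_assoc]

theorem integrable_slowWeight_mul_inner_sq (w : E) (ht : 0 < t) :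
    Integrable fun ξ : E => slowWeight (4 * π ^ 2 * ‖ξ‖ ^ 2) t * ⟪w, ξ⟫ ^ 2 := by
  have hmeas : Measurable fun ξ : E => slowWeight (4 * π ^ 2 * ‖ξ‖ ^ 2) t :=
    (measurable_slowWeight t).comp (by fun_prop)
  refine ((integrable_norm_pow_mul_exp_neg 2 (by positivity : 0 < 4 * π ^ 2 * t)).const_mul
    (2 * ‖w‖ ^ 2)).mono' (by fun_prop) (ae_of_all _ fun ξ => ?_)
  rw [norm_mul, Real.norm_of_nonneg (slowWeight_nonneg _ t), norm_pow, Real.norm_eq_abs]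
  calc slowWeight (4 * π ^ 2 * ‖ξ‖ ^ 2) t * |⟪w, ξ⟫| ^ 2
      ≤ 2 * exp (-(4 * π ^ 2 * t * ‖ξ‖ ^ 2)) * (‖w‖ * ‖ξ‖) ^ 2 := by
        gcongr
        · exact slowWeight_le_exp_neg_mul_sq ht.le ξ
        · exact abs_real_inner_le_norm w ξ
    _ = 2 * ‖w‖ ^ 2 * (‖ξ‖ ^ 2 * exp (-(4 * π ^ 2 * t * ‖ξ‖ ^ 2))) := by ring

theorem exists_le_sqrt_pow_mul_integral_slowWeight_mul_inner_sq :
    ∃ c > 0, ∀ w : E, ∀ t ≥ 1, c * ‖w‖ ^ 2 ≤ √t ^ (Module.finrank ℝ E + 2) *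
      ∫ ξ : E, slowWeight (4 * π ^ 2 * ‖ξ‖ ^ 2) t * ⟪w, ξ⟫ ^ 2 := by
  have hvol : 0 < volume.real (ball (0 : E) 1) :=
    ENNReal.toReal_pos (measure_ball_pos _ _ one_pos).ne' measure_ball_lt_top.ne
  refine ⟨exp (-1) * (1 / 64) ^ (Module.finrank ℝ E + 2) * volume.real (ball (0 : E) 1),
    by positivity, fun w t ht => ?_⟩
  have : 0 < √t := Real.sqrt_pos.2 (by linarith)
  have hint := integrable_slowWeight_mul_inner_sq w (by linarith : 0 < t)
  have hball : exp (-1) * ∫ ξ in closedBall (0 : E) (1 / 16 / √t), ⟪w, ξ⟫ ^ 2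
      ≤ ∫ ξ : E, slowWeight (4 * π ^ 2 * ‖ξ‖ ^ 2) t * ⟪w, ξ⟫ ^ 2 := by
    rw [← integral_const_mul]
    refine (setIntegral_mono_on ?_ hint.integrableOn measurableSet_closedBall fun ξ hξ => ?_).trans
      (setIntegral_le_integral hint
        (ae_of_all _ fun ξ => mul_nonneg (slowWeight_nonneg _ t) (sq_nonneg _)))
    · exact (Continuous.continuousOn (by fun_prop)).integrableOn_compact (isCompact_closedBall _ _)
    · gcongr
      exact exp_neg_one_le_slowWeight ht hξ
  calc exp (-1) * (1 / 64) ^ (Module.finrank ℝ E + 2) * volume.real (ball (0 : E) 1) * ‖w‖ ^ 2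
      = √t ^ (Module.finrank ℝ E + 2) * (exp (-1) * ((1 / 16 / √t / 4) ^ (Module.finrank ℝ E + 2)
          * volume.real (ball (0 : E) 1) * ‖w‖ ^ 2)) := by
        rw [show 1 / 16 / √t / 4 = 1 / 64 / √t by ring, div_pow _ √t]
        field_simp
    _ ≤ √t ^ (Module.finrank ℝ E + 2) *
          ∫ ξ : E, slowWeight (4 * π ^ 2 * ‖ξ‖ ^ 2) t * ⟪w, ξ⟫ ^ 2 := by
        gcongr
        refine le_trans ?_ hball
        gcongr
        exact le_setIntegral_inner_sq w (by positivity)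

end FrequencyIntegrals

section FourierRepresentation

open scoped FourierTransform RealInnerProductSpace
open Complex (I)

variable {E : Type*} [NormedAddCommGroup E] [InnerProductSpace ℝ E] [FiniteDimensional ℝ E]
  [MeasurableSpace E] [BorelSpace E] {f g : E → ℝ}

theorem integrable_pow_mul_norm_fourier (hf : ContDiff ℝ (⊤ : ℕ∞) f) (hfc : HasCompactSupport f)
    (j : ℕ) : Integrable fun ξ => ‖ξ‖ ^ j * ‖𝓕 (fun x => (f x : ℂ)) ξ‖ := by
  have hf' : ContDiff ℝ (⊤ : ℕ∞) fun x => (f x : ℂ) := Complex.ofRealCLM.contDiff.comp hf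
  have hfc' : HasCompactSupport fun x => (f x : ℂ) := hfc.comp_left Complex.ofReal_zero
  have hint := (𝓕 (hfc'.toSchwartzMap hf')).integrable_pow_mul volume j
  rwa [SchwartzMap.fourier_coe] at hint

/-- The size at frequency `ξ` of the initial data, which bounds the Fourier transform of the
solution of the damped wave equation at that frequency for all times. -/
def dataSize (f g : E → ℝ) (ξ : E) : ℝ :=
  (1 + 4 * π ^ 2 * ‖ξ‖ ^ 2) * ‖𝓕 (fun x => (f x : ℂ)) ξ‖ + ‖𝓕 (fun x => (g x : ℂ)) ξ‖

theorem dataSize_nonneg (f g : E → ℝ) (ξ : E) : 0 ≤ dataSize f g ξ := by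
  unfold dataSize
  positivity

theorem integrable_norm_mul_dataSize (hf : ContDiff ℝ (⊤ : ℕ∞) f) (hg : ContDiff ℝ (⊤ : ℕ∞) g)
    (hfc : HasCompactSupport f) (hgc : HasCompactSupport g) :
    Integrable fun ξ => ‖ξ‖ * dataSize f g ξ := by
  refine (((integrable_pow_mul_norm_fourier hf hfc 1).add
    ((integrable_pow_mul_norm_fourier hf hfc 3).const_mul (4 * π ^ 2))).add
    (integrable_pow_mul_norm_fourier hg hgc 1)).congr (ae_of_all _ fun ξ => ?_)
  simp only [Pi.add_apply, dataSize]
  ring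

namespace IsDampedWave

variable {ι : Type*} [Fintype ι] {b : OrthonormalBasis ι ℝ E} {U : E × ℝ → ℝ}
  {D : E × ℝ → (E × ℝ →L[ℝ] ℝ)} {H : E × ℝ → (E × ℝ →L[ℝ] E × ℝ →L[ℝ] ℝ)} {t R : ℝ}

theorem spatialFourier_zero (hU : IsDampedWave b U D H f g) (ξ : E) :
    spatialFourier U ξ 0 = 𝓕 (fun x => (f x : ℂ)) ξ := by
  simp only [spatialFourier, hU.initial]

theorem spatialFourier_timeDeriv_zero (hU : IsDampedWave b U D H f g) (ξ : E) :
    spatialFourier (fun p => D p (0, 1)) ξ 0 = 𝓕 (fun x => (g x : ℂ)) ξ := by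
  simp only [spatialFourier, hU.initial_time]

theorem norm_spatialFourier_le (hU : IsDampedWave b U D H f g) (hf : tsupport f ⊆ closedBall 0 R)
    (hg : tsupport g ⊆ closedBall 0 R) (ht : 0 < t) (ξ : E) :
    ‖spatialFourier U ξ t‖ ≤ 6 * dataSize f g ξ := by
  have hosc := hU.isDampedOscillator_spatialFourier hf hg ξ
  simpa only [dataSize, hU.spatialFourier_zero, hU.spatialFourier_timeDeriv_zero]
    using hosc.norm_le (by positivity) ht

theorem integrable_slice (hU : IsDampedWave b U D H f g) (hf : tsupport f ⊆ closedBall 0 R)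
    (hg : tsupport g ⊆ closedBall 0 R) (ht : 0 ≤ t) : Integrable fun x => U (x, t) :=
  (continuous_spaceSlice hU.continuousOn ht).integrable_of_hasCompactSupport <|
    .intro (isCompact_closedBall 0 (R + 3 * t)) fun x hx =>
      hU.eq_zero_of_far hf hg (p := (x, t)) ht
        (not_le.1 fun h => hx (mem_closedBall_zero_iff.2 h))

theorem continuous_spatialFourier (hU : IsDampedWave b U D H f g)
    (hf : tsupport f ⊆ closedBall 0 R) (hg : tsupport g ⊆ closedBall 0 R) (ht : 0 ≤ t) :
    Continuous fun ξ => spatialFourier U ξ t :=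
  VectorFourier.fourierIntegral_continuous Real.continuous_fourierChar continuous_inner
    (hU.integrable_slice hf hg ht).ofReal

theorem integrable_inner_mul_spatialFourier (hU : IsDampedWave b U D H f g)
    (hfs : ContDiff ℝ (⊤ : ℕ∞) f) (hgs : ContDiff ℝ (⊤ : ℕ∞) g)
    (hf : tsupport f ⊆ closedBall 0 R) (hg : tsupport g ⊆ closedBall 0 R) (ht : 0 < t) (w : E) :
    Integrable fun ξ => (⟪w, ξ⟫ : ℂ) * spatialFourier U ξ t := by
  have hcompact := isCompact_closedBall (0 : E) R
  refine ((integrable_norm_mul_dataSize hfs hgs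
    (hcompact.of_isClosed_subset (isClosed_tsupport f) hf)
    (hcompact.of_isClosed_subset (isClosed_tsupport g) hg)).const_mul (6 * ‖w‖)).mono' ?_
    (ae_of_all _ fun ξ => ?_)
  · have := hU.continuous_spatialFourier hf hg ht.le
    exact Continuous.aestronglyMeasurable (by fun_prop)
  · rw [norm_mul, Complex.norm_real]
    calc ‖⟪w, ξ⟫‖ * ‖spatialFourier U ξ t‖ ≤ (‖w‖ * ‖ξ‖) * (6 * dataSize f g ξ) := by
          gcongr
          · exact norm_inner_le_norm w ξ
          · exact hU.norm_spatialFourier_le hf hg ht ξ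
      _ = 6 * ‖w‖ * (‖ξ‖ * dataSize f g ξ) := by ring

theorem inner_mul_sineTransform_eq_im (hU : IsDampedWave b U D H f g)
    (hf : tsupport f ⊆ closedBall 0 R) (hg : tsupport g ⊆ closedBall 0 R) (ht : 0 ≤ t) (w x ξ : E) :
    ⟪w, ξ⟫ * sineTransform (fun y => U (y, t)) x ξ
      = (Complex.exp (↑(2 * π * ⟪ξ, x⟫) * I) * (⟪w, ξ⟫ * spatialFourier U ξ t)).im := by
  rw [sineTransform_eq_im (hU.integrable_slice hf hg ht), mul_left_comm, Complex.im_ofReal_mul]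
  rfl

theorem integrable_exp_mul_inner_mul_spatialFourier (hU : IsDampedWave b U D H f g)
    (hfs : ContDiff ℝ (⊤ : ℕ∞) f) (hgs : ContDiff ℝ (⊤ : ℕ∞) g)
    (hf : tsupport f ⊆ closedBall 0 R) (hg : tsupport g ⊆ closedBall 0 R) (ht : 0 < t) (w x : E) :
    Integrable fun ξ =>
      Complex.exp (↑(2 * π * ⟪ξ, x⟫) * I) * (⟪w, ξ⟫ * spatialFourier U ξ t) :=
  (hU.integrable_inner_mul_spatialFourier hfs hgs hf hg ht w).bdd_mul
    (Continuous.aestronglyMeasurable (by fun_prop))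
    (ae_of_all _ fun _ => (Complex.norm_exp_ofReal_mul_I _).le)

theorem integrable_inner_mul_sineTransform (hU : IsDampedWave b U D H f g)
    (hfs : ContDiff ℝ (⊤ : ℕ∞) f) (hgs : ContDiff ℝ (⊤ : ℕ∞) g)
    (hf : tsupport f ⊆ closedBall 0 R) (hg : tsupport g ⊆ closedBall 0 R) (ht : 0 < t) (w x : E) :
    Integrable fun ξ => ⟪w, ξ⟫ * sineTransform (fun y => U (y, t)) x ξ := by
  simp only [hU.inner_mul_sineTransform_eq_im hf hg ht.le]
  exact (hU.integrable_exp_mul_inner_mul_spatialFourier hfs hgs hf hg ht w x).im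

theorem fderiv_apply_eq_integral (hU : IsDampedWave b U D H f g) (hfs : ContDiff ℝ (⊤ : ℕ∞) f)
    (hgs : ContDiff ℝ (⊤ : ℕ∞) g) (hf : tsupport f ⊆ closedBall 0 R)
    (hg : tsupport g ⊆ closedBall 0 R) (ht : 0 < t) (x w : E) :
    D (x, t) (w, 0) = -(2 * π * ∫ ξ, ⟪w, ξ⟫ * sineTransform (fun y => U (y, t)) x ξ) := by
  have hcont : Continuous fun y => (D (y, t) (w, 0) : ℂ) := Complex.continuous_ofReal.comp
    (continuous_spaceSlice (hU.continuousOn_fderiv_apply (w, 0)) ht.le)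
  have hint : Integrable fun y => (D (y, t) (w, 0) : ℂ) :=
    hcont.integrable_of_hasCompactSupport <|
      .intro (isCompact_closedBall 0 (R + 3 * t)) fun y hy => by
        rw [mem_closedBall_zero_iff, not_le] at hy
        rw [hU.fderiv_eq_zero_of_far hf hg (p := (y, t)) ht hy, zero_apply, Complex.ofReal_zero]
  have hfourier : 𝓕 (fun y => (D (y, t) (w, 0) : ℂ))
      = fun ξ => 2 * π * I * (⟪w, ξ⟫ * spatialFourier U ξ t) := funext fun ξ =>
    (hU.spatialFourier_fderiv hf hg ht w ξ).trans (mul_assoc _ _ _)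
  have hinv := congrFun (hcont.fourierInv_fourier_eq hint
    (hfourier ▸ (hU.integrable_inner_mul_spatialFourier hfs hgs hf hg ht w).const_mul _)) x
  rw [Real.fourierInv_eq', hfourier] at hinv
  simp only [smul_eq_mul, mul_left_comm _ (2 * π * I)] at hinv
  rw [integral_const_mul] at hinv
  have him := integral_im (hU.integrable_exp_mul_inner_mul_spatialFourier hfs hgs hf hg ht w x)
  simp only [RCLike.im_eq_complex_im, ← hU.inner_mul_sineTransform_eq_im hf hg ht.le] at him
  rw [him, ← Complex.ofReal_re (D (x, t) (w, 0)), ← hinv]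
  simp only [Complex.mul_re, Complex.mul_im, Complex.ofReal_re, Complex.ofReal_im, Complex.I_re,
    Complex.I_im, Complex.re_ofNat, Complex.im_ofNat]
  ring

end IsDampedWave

end FourierRepresentation

section CriticalPoints

open scoped FourierTransform RealInnerProductSpace
open Complex (I)

variable {E : Type*} [NormedAddCommGroup E] [InnerProductSpace ℝ E] [FiniteDimensional ℝ E]
  [MeasurableSpace E] [BorelSpace E] {f g : E → ℝ} {R : ℝ}

/-- The constant in the cubic error term of the low-frequency expansion of the solution with
initial data `(f, g)`. -/
def slowErrorConst (f g : E → ℝ) : ℝ := 4 / 3 * π ^ 3 * ((∫ y, |(f + g) y|) + 8 * ∫ y, |f y|)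

theorem slowErrorConst_nonneg (f g : E → ℝ) : 0 ≤ slowErrorConst f g := by
  unfold slowErrorConst
  positivity

theorem abs_sineTransform_add_sub_le (hfc : Continuous f) (hgc : Continuous g)
    (hf : tsupport f ⊆ closedBall 0 R) (hg : tsupport g ⊆ closedBall 0 R) (hR : 1 ≤ R) (x : E)
    {ξ : E} (hξ : 4 * π ^ 2 * ‖ξ‖ ^ 2 ≤ 3 / 16) :
    |sineTransform g x ξ + (1 - slowRate (4 * π ^ 2 * ‖ξ‖ ^ 2)) * sineTransform f x ξ
        - 2 * π * ⟪firstMoment (f + g) x, ξ⟫| ≤ slowErrorConst f g * ((R + ‖x‖) * ‖ξ‖) ^ 3 := by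
  have hcompact := isCompact_closedBall (0 : E) R
  have hfi := hfc.integrable_of_hasCompactSupport (μ := volume)
    (hcompact.of_isClosed_subset (isClosed_tsupport f) hf)
  have hgi := hgc.integrable_of_hasCompactSupport (μ := volume)
    (hcompact.of_isClosed_subset (isClosed_tsupport g) hg)
  have hsum := abs_sineTransform_sub_le (hfc.add hgc)
    ((tsupport_add f g).trans (union_subset hf hg)) x ξ
  have hrate₀ : 0 ≤ slowRate (4 * π ^ 2 * ‖ξ‖ ^ 2) := slowRate_nonneg (by positivity)
  have hnorm : ‖ξ‖ ≤ (R + ‖x‖) * ‖ξ‖ :=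
    le_mul_of_one_le_left (norm_nonneg ξ) (by linarith [norm_nonneg x])
  have hrate : slowRate (4 * π ^ 2 * ‖ξ‖ ^ 2) * |sineTransform f x ξ|
      ≤ 4 / 3 * (4 * π ^ 2 * ((R + ‖x‖) * ‖ξ‖) ^ 2)
        * ((∫ y, |f y|) * (2 * π * ((R + ‖x‖) * ‖ξ‖))) := by
    gcongr
    · exact (slowRate_le (by positivity) hξ).trans (by gcongr)
    · exact abs_sineTransform_le hfi hf x ξ
  rw [sineTransform_add hfi hgi] at hsum
  calc _ = |sineTransform f x ξ + sineTransform g x ξ - 2 * π * ⟪firstMoment (f + g) x, ξ⟫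
        - slowRate (4 * π ^ 2 * ‖ξ‖ ^ 2) * sineTransform f x ξ| := by ring_nf
    _ ≤ (∫ y, |(f + g) y|) * ((2 * π * ((R + ‖x‖) * ‖ξ‖)) ^ 3 / 6)
        + 4 / 3 * (4 * π ^ 2 * ((R + ‖x‖) * ‖ξ‖) ^ 2)
          * ((∫ y, |f y|) * (2 * π * ((R + ‖x‖) * ‖ξ‖))) := by
      refine (abs_sub _ _).trans (add_le_add hsum ?_)
      rwa [abs_mul, abs_of_nonneg hrate₀]
    _ = slowErrorConst f g * ((R + ‖x‖) * ‖ξ‖) ^ 3 := by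
      unfold slowErrorConst
      ring

theorem sqrt_pow_mul_exp_neg_le (m : ℕ) {t : ℝ} (ht : 1 ≤ t) :
    √t ^ m * exp (-(t / 16)) ≤ m ! * 16 ^ m := by
  have hsqrt : √t ^ m ≤ t ^ m :=
    pow_le_pow_left₀ (Real.sqrt_nonneg t) (Real.sqrt_le_self_iff.2 (Or.inr ht)) m
  have hexp := Real.pow_div_factorial_le_exp (t / 16) (by positivity) m
  rw [div_pow, div_div, div_le_iff₀ (by positivity)] at hexp
  rw [Real.exp_neg, ← div_eq_mul_inv, div_le_iff₀ (Real.exp_pos _)]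
  exact hsqrt.trans (hexp.trans_eq (by ring))

/-- The error, at distance `r` and time `t`, in replacing the gradient of the solution with initial
data `(f, g)` by its slow leading term: a cubic error at low frequencies, whose Gaussian moment is
`O(t ^ (-(n + 4) / 2))`, and an exponentially decaying remainder. -/
def gradientError (f g : E → ℝ) (r t : ℝ) : ℝ :=
  2 * slowErrorConst f g * r ^ 3 * (∫ ξ : E, ‖ξ‖ ^ 4 * exp (-(4 * π ^ 2 * t * ‖ξ‖ ^ 2)))
    + 4 * exp (-(t / 16)) * ∫ ξ, ‖ξ‖ * dataSize f g ξ

theorem exists_sqrt_pow_mul_gradientError_le (f g : E → ℝ) : ∃ C > 0, ∀ r ≥ 1, ∀ t ≥ 1,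
    √t ^ (Module.finrank ℝ E + 4) * gradientError f g r t ≤ C * r ^ 3 := by
  let d := Module.finrank ℝ E
  let K := ∫ ξ : E, ‖ξ‖ ^ 4 * exp (-(4 * π ^ 2 * ‖ξ‖ ^ 2))
  let N := ∫ ξ, ‖ξ‖ * dataSize f g ξ
  let Q : ℝ := (d + 4)! * 16 ^ (d + 4)
  have hB := slowErrorConst_nonneg f g
  have : 0 ≤ K := integral_nonneg fun ξ => by positivity
  have hN : 0 ≤ N := integral_nonneg fun ξ => mul_nonneg (norm_nonneg ξ) (dataSize_nonneg f g ξ)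
  refine ⟨2 * slowErrorConst f g * K + 4 * Q * N + 1, by positivity, fun r hr t ht => ?_⟩
  have hr₃ : 1 ≤ r ^ 3 := one_le_pow₀ hr
  calc √t ^ (d + 4) * gradientError f g r t
      = 2 * slowErrorConst f g * K * r ^ 3 + 4 * (√t ^ (d + 4) * exp (-(t / 16))) * N := by
        unfold K gradientError
        rw [← sqrt_pow_mul_integral_norm_pow_mul_exp_neg 4 (4 * π ^ 2) (by linarith : 0 < t)]
        ring
    _ ≤ 2 * slowErrorConst f g * K * r ^ 3 + 4 * Q * N := by
        gcongr
        exact sqrt_pow_mul_exp_neg_le (d + 4) ht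
    _ ≤ 2 * slowErrorConst f g * K * r ^ 3 + 4 * Q * N * r ^ 3 + r ^ 3 := by
        linarith [le_mul_of_one_le_right (by positivity : 0 ≤ 4 * Q * N) hr₃]
    _ = (2 * slowErrorConst f g * K + 4 * Q * N + 1) * r ^ 3 := by ring

namespace IsDampedWave

variable {ι : Type*} [Fintype ι] {b : OrthonormalBasis ι ℝ E} {U : E × ℝ → ℝ}
  {D : E × ℝ → (E × ℝ →L[ℝ] ℝ)} {H : E × ℝ → (E × ℝ →L[ℝ] E × ℝ →L[ℝ] ℝ)} {t : ℝ}

theorem abs_sineTransform_sub_slowWeight_mul_le (hU : IsDampedWave b U D H f g)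
    (hfi : Integrable f) (hgi : Integrable g)
    (hf : tsupport f ⊆ closedBall 0 R) (hg : tsupport g ⊆ closedBall 0 R) (ht : 0 < t) (x ξ : E) :
    |sineTransform (fun y => U (y, t)) x ξ - slowWeight (4 * π ^ 2 * ‖ξ‖ ^ 2) t *
        (sineTransform g x ξ + (1 - slowRate (4 * π ^ 2 * ‖ξ‖ ^ 2)) * sineTransform f x ξ)|
      ≤ 4 * dataSize f g ξ * exp (-(t / 16)) := by
  let L : ℂ →L[ℝ] ℝ := Complex.imCLM.comp
    (ContinuousLinearMap.mul ℝ ℂ (Complex.exp (↑(2 * π * ⟪ξ, x⟫) * I)))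
  have hL : ∀ z, ‖L z‖ ≤ ‖z‖ := fun z => (Complex.abs_im_le_norm _).trans_eq <|
    (norm_mul _ _).trans (by rw [Complex.norm_exp_ofReal_mul_I, one_mul])
  have hslow := ((hU.isDampedOscillator_spatialFourier hf hg ξ).map L).norm_sub_slowWeight_smul_le
    (by positivity) ht
  simp only [hU.spatialFourier_zero, hU.spatialFourier_timeDeriv_zero, smul_eq_mul,
    Real.norm_eq_abs] at hslow
  rw [sineTransform_eq_im (hU.integrable_slice hf hg ht.le), sineTransform_eq_im hfi,
    sineTransform_eq_im hgi]
  refine hslow.trans ?_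
  unfold dataSize
  gcongr <;> exact hL _

theorem abs_sineTransform_sub_inner_firstMoment_le (hU : IsDampedWave b U D H f g)
    (hfc : Continuous f) (hgc : Continuous g) (hf : tsupport f ⊆ closedBall 0 R)
    (hg : tsupport g ⊆ closedBall 0 R) (hR : 1 ≤ R) (ht : 0 < t) (x ξ : E) :
    |sineTransform (fun y => U (y, t)) x ξ
        - slowWeight (4 * π ^ 2 * ‖ξ‖ ^ 2) t * (2 * π * ⟪firstMoment (f + g) x, ξ⟫)|
      ≤ 2 * exp (-(4 * π ^ 2 * t * ‖ξ‖ ^ 2)) * (slowErrorConst f g * ((R + ‖x‖) * ‖ξ‖) ^ 3)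
        + 4 * dataSize f g ξ * exp (-(t / 16)) := by
  have hcompact := isCompact_closedBall (0 : E) R
  have hfast := hU.abs_sineTransform_sub_slowWeight_mul_le
    (hfc.integrable_of_hasCompactSupport (hcompact.of_isClosed_subset (isClosed_tsupport f) hf))
    (hgc.integrable_of_hasCompactSupport (hcompact.of_isClosed_subset (isClosed_tsupport g) hg))
    hf hg ht x ξ
  have hslow : |slowWeight (4 * π ^ 2 * ‖ξ‖ ^ 2) t *
        (sineTransform g x ξ + (1 - slowRate (4 * π ^ 2 * ‖ξ‖ ^ 2)) * sineTransform f x ξ)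
        - slowWeight (4 * π ^ 2 * ‖ξ‖ ^ 2) t * (2 * π * ⟪firstMoment (f + g) x, ξ⟫)|
      ≤ 2 * exp (-(4 * π ^ 2 * t * ‖ξ‖ ^ 2)) *
        (slowErrorConst f g * ((R + ‖x‖) * ‖ξ‖) ^ 3) := by
    have hconst := slowErrorConst_nonneg f g
    rw [← mul_sub, abs_mul, abs_of_nonneg (slowWeight_nonneg _ t)]
    rcases le_or_gt (4 * π ^ 2 * ‖ξ‖ ^ 2) (3 / 16) with hlow | hhigh
    · gcongr
      · exact slowWeight_le_exp_neg_mul_sq ht.le ξ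
      · exact abs_sineTransform_add_sub_le hfc hgc hf hg hR x hlow
    · rw [slowWeight_of_gt hhigh, zero_mul]
      positivity
  exact (abs_sub_le _ _ _).trans ((add_le_add hfast hslow).trans_eq (add_comm _ _))

theorem two_pi_mul_integral_slowWeight_le (hU : IsDampedWave b U D H f g)
    (hfs : ContDiff ℝ (⊤ : ℕ∞) f) (hgs : ContDiff ℝ (⊤ : ℕ∞) g)
    (hf : tsupport f ⊆ closedBall 0 R) (hg : tsupport g ⊆ closedBall 0 R) (hR : 1 ≤ R)
    (ht : 0 < t) {x : E} (hx : D (x, t) (firstMoment (f + g) x, 0) = 0) :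
    2 * π * ∫ ξ : E, slowWeight (4 * π ^ 2 * ‖ξ‖ ^ 2) t * ⟪firstMoment (f + g) x, ξ⟫ ^ 2
      ≤ ‖firstMoment (f + g) x‖ * gradientError f g (R + ‖x‖) t := by
  have hcompact := isCompact_closedBall (0 : E) R
  set w := firstMoment (f + g) x
  have hsine := hU.integrable_inner_mul_sineTransform hfs hgs hf hg ht w x
  have hzero : ∫ ξ, ⟪w, ξ⟫ * sineTransform (fun y => U (y, t)) x ξ = 0 := by
    rw [hU.fderiv_apply_eq_integral hfs hgs hf hg ht, neg_eq_zero] at hx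
    exact (mul_eq_zero.1 hx).resolve_left Real.two_pi_pos.ne'
  have hweight := (integrable_slowWeight_mul_inner_sq w ht).const_mul (2 * π)
  have hslow := (integrable_norm_pow_mul_exp_neg (E := E) 4
    (by positivity : 0 < 4 * π ^ 2 * t)).const_mul (2 * slowErrorConst f g * (R + ‖x‖) ^ 3)
  have hfast := (integrable_norm_mul_dataSize hfs hgs
    (hcompact.of_isClosed_subset (isClosed_tsupport f) hf)
    (hcompact.of_isClosed_subset (isClosed_tsupport g) hg)).const_mul (4 * exp (-(t / 16)))
  rw [gradientError, ← sub_zero (2 * π * _), ← hzero, ← integral_const_mul,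
    ← integral_sub hweight hsine, ← integral_const_mul, ← integral_const_mul (4 * _),
    ← integral_add hslow hfast, ← integral_const_mul]
  refine integral_mono (hweight.sub hsine) ((hslow.add hfast).const_mul _) fun ξ => ?_
  calc 2 * π * (slowWeight (4 * π ^ 2 * ‖ξ‖ ^ 2) t * ⟪w, ξ⟫ ^ 2)
        - ⟪w, ξ⟫ * sineTransform (fun y => U (y, t)) x ξ
      = ⟪w, ξ⟫ * (slowWeight (4 * π ^ 2 * ‖ξ‖ ^ 2) t * (2 * π * ⟪w, ξ⟫)
          - sineTransform (fun y => U (y, t)) x ξ) := by ring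
    _ ≤ (‖w‖ * ‖ξ‖) * (2 * exp (-(4 * π ^ 2 * t * ‖ξ‖ ^ 2)) *
          (slowErrorConst f g * ((R + ‖x‖) * ‖ξ‖) ^ 3)
        + 4 * dataSize f g ξ * exp (-(t / 16))) := by
      refine (le_abs_self _).trans ?_
      rw [abs_mul, abs_sub_comm]
      gcongr
      · exact abs_real_inner_le_norm w ξ
      · exact hU.abs_sineTransform_sub_inner_firstMoment_le hfs.continuous hgs.continuous hf hg hR
          ht x ξ
    _ = _ := by ring

/-- At a critical point, testing `∇u = 0` against the first moment `w` itself leaves the main term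
`∫ slowWeight ⟪w, ξ⟫²`, which is larger than the error terms by a factor `t`. -/
theorem exists_norm_firstMoment_le (hU : IsDampedWave b U D H f g)
    (hfs : ContDiff ℝ (⊤ : ℕ∞) f) (hgs : ContDiff ℝ (⊤ : ℕ∞) g)
    (hf : tsupport f ⊆ closedBall 0 R) (hg : tsupport g ⊆ closedBall 0 R) (hR : 1 ≤ R) :
    ∃ C > 0, ∀ x, ∀ t ≥ 1, (∀ w, D (x, t) (w, 0) = 0) →
      ‖firstMoment (f + g) x‖ ≤ C * (R + ‖x‖) ^ 3 / t := by
  obtain ⟨c, hc, hlower⟩ := exists_le_sqrt_pow_mul_integral_slowWeight_mul_inner_sq (E := E)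
  obtain ⟨A, hA, herror⟩ := exists_sqrt_pow_mul_gradientError_le f g
  refine ⟨A / (2 * π * c), by positivity, fun x t ht hx => ?_⟩
  have ht₀ : 0 < t := by linarith
  have hr : 1 ≤ R + ‖x‖ := by linarith [norm_nonneg x]
  set w := firstMoment (f + g) x
  rcases eq_or_ne w 0 with hw | hw
  · rw [hw, norm_zero]
    positivity
  have htest : 2 * π * ∫ ξ : E, slowWeight (4 * π ^ 2 * ‖ξ‖ ^ 2) t * ⟪w, ξ⟫ ^ 2
      ≤ ‖w‖ * gradientError f g (R + ‖x‖) t :=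
    hU.two_pi_mul_integral_slowWeight_le hfs hgs hf hg hR ht₀ (hx w)
  rw [div_mul_eq_mul_div, div_div, le_div_iff₀ (by positivity)]
  refine le_of_mul_le_mul_left ?_ (norm_pos_iff.2 hw)
  calc ‖w‖ * (‖w‖ * (2 * π * c * t)) = 2 * π * t * (c * ‖w‖ ^ 2) := by ring
    _ ≤ 2 * π * t * (√t ^ (Module.finrank ℝ E + 2) *
        ∫ ξ : E, slowWeight (4 * π ^ 2 * ‖ξ‖ ^ 2) t * ⟪w, ξ⟫ ^ 2) :=
      mul_le_mul_of_nonneg_left (hlower w t ht) (by positivity)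
    _ = √t ^ (Module.finrank ℝ E + 4) *
        (2 * π * ∫ ξ : E, slowWeight (4 * π ^ 2 * ‖ξ‖ ^ 2) t * ⟪w, ξ⟫ ^ 2) := by
      rw [pow_add _ _ 4, pow_add _ _ 2, show √t ^ 4 = (√t ^ 2) ^ 2 by ring, Real.sq_sqrt ht₀.le]
      ring
    _ ≤ √t ^ (Module.finrank ℝ E + 4) * (‖w‖ * gradientError f g (R + ‖x‖) t) :=
      mul_le_mul_of_nonneg_left htest (by positivity)
    _ = ‖w‖ * (√t ^ (Module.finrank ℝ E + 4) * gradientError f g (R + ‖x‖) t) := by ring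
    _ ≤ ‖w‖ * (A * (R + ‖x‖) ^ 3) := by
      gcongr ‖w‖ * ?_
      exact herror _ hr t ht

end IsDampedWave

end CriticalPoints

theorem firstMoment_eq_smul_sub_centroid {v : EuclideanSpace ℝ (Fin n) → ℝ} (hv : Continuous v)
    (hvc : HasCompactSupport v) (hmass : ∫ y, v y ≠ 0) (x : EuclideanSpace ℝ (Fin n)) :
    firstMoment v x = (∫ y, v y) • (x - centroid v) := by
  have hint := hv.integrable_of_hasCompactSupport (μ := volume) hvc
  have hmoment : Integrable fun y => v y • y :=
    (hv.smul continuous_id).integrable_of_hasCompactSupport hvc.smul_right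
  simp only [firstMoment, smul_sub]
  rw [integral_sub (hint.smul_const x) hmoment, integral_smul_const, centroid, smul_inv_smul₀ hmass]

theorem fderiv_apply_eq_zero_of_mem_critSet {u : EuclideanSpace ℝ (Fin n) → ℝ → ℝ}
    {x : EuclideanSpace ℝ (Fin n)} {t : ℝ} {L : EuclideanSpace ℝ (Fin n) × ℝ →L[ℝ] ℝ}
    (hL : HasFDerivAt (fun p : EuclideanSpace ℝ (Fin n) × ℝ => u p.1 p.2) L (x, t))
    (hx : x ∈ critSet fun z => u z t) (w : EuclideanSpace ℝ (Fin n)) : L (w, 0) = 0 := by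
  have hslice : HasFDerivAt (fun z => u z t) (L.comp (.inl ℝ _ ℝ)) x :=
    hL.comp (f := fun z => (z, t)) x (hasFDerivAt_prodMk_left x t)
  have hgradient := hslice.hasGradientAt.gradient
  rw [hx.2, eq_comm, LinearIsometryEquiv.map_eq_zero_iff] at hgradient
  exact DFunLike.congr_fun hgradient w

theorem CS_subset_closedBall {v : EuclideanSpace ℝ (Fin n) → ℝ} {R : ℝ}
    (hv : tsupport v ⊆ closedBall 0 R) : CS v ⊆ closedBall 0 R :=
  convexHull_min hv (convex_closedBall 0 R)

theorem norm_le_of_mem_CS_add_smul_closedBall {v : EuclideanSpace ℝ (Fin n) → ℝ} {R s : ℝ}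
    (hv : tsupport v ⊆ closedBall 0 R) {x : EuclideanSpace ℝ (Fin n)}
    (hx : x ∈ CS v + s • closedBall (0 : EuclideanSpace ℝ (Fin n)) 1) : ‖x‖ ≤ R + |s| := by
  obtain ⟨y, hy, _, ⟨z, hz, rfl⟩, rfl⟩ := hx
  refine (norm_add_le _ _).trans (add_le_add
    (mem_closedBall_zero_iff.1 (CS_subset_closedBall hv hy)) ((norm_smul s z).trans_le ?_))
  exact mul_le_of_le_one_right (abs_nonneg s) (mem_closedBall_zero_iff.1 hz)

theorem tendsto_sq_div_of_tendsto_div_sqrt {ψ : ℝ → ℝ}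
    (h : Tendsto (fun t => ψ t / √t) atTop (𝓝 0)) (b : ℝ) :
    Tendsto (fun t => (b + |ψ t|) ^ 2 / t) atTop (𝓝 0) := by
  have hb : Tendsto (fun t : ℝ => b / √t) atTop (𝓝 0) :=
    tendsto_const_nhds.div_atTop Real.tendsto_sqrt_atTop
  have hsq := (hb.add h.abs).pow 2
  rw [abs_zero, add_zero, zero_pow two_ne_zero] at hsq
  refine hsq.congr' ?_
  filter_upwards [eventually_gt_atTop 0] with t ht
  rw [abs_div, abs_of_nonneg (Real.sqrt_nonneg t), ← add_div, div_pow, Real.sq_sqrt ht.le]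

theorem norm_sub_le_of_cubic_bound {E : Type*} [SeminormedAddCommGroup E] {x m : E}
    {R C s t : ℝ} (hR : 0 ≤ R) (hC : 0 ≤ C) (ht : 0 < t) (hx : R + ‖x‖ ≤ s)
    (hcubic : ‖x - m‖ ≤ C * (R + ‖x‖) ^ 3 / t) (hsmall : C * (s ^ 2 / t) ≤ 1 / 2) :
    ‖x - m‖ ≤ 2 * C * (R + ‖m‖) * (s ^ 2 / t) := by
  have hnorm : R + ‖x‖ ≤ R + ‖m‖ + ‖x - m‖ := by linarith [norm_le_norm_add_norm_sub' x m]
  have hbound : ‖x - m‖ ≤ C * (s ^ 2 / t) * (R + ‖m‖ + ‖x - m‖) :=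
    calc ‖x - m‖ ≤ C * (R + ‖x‖) ^ 3 / t := hcubic
      _ = C * ((R + ‖x‖) ^ 2 / t) * (R + ‖x‖) := by ring
      _ ≤ C * (s ^ 2 / t) * (R + ‖m‖ + ‖x - m‖) :=
        mul_le_mul (by gcongr) hnorm (by positivity) (by positivity)
  linarith [mul_le_mul_of_nonneg_right hsmall (norm_nonneg (x - m))]

theorem sobNorm_nonneg (l : ℕ) (v : EuclideanSpace ℝ (Fin n) → ℝ) : 0 ≤ sobNorm l v :=
  Finset.sum_nonneg fun _ _ => Real.iSup_nonneg fun _ => norm_nonneg _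

theorem L1norm_nonneg (v : EuclideanSpace ℝ (Fin n) → ℝ) : 0 ≤ L1norm v :=
  integral_nonneg fun _ => abs_nonneg _

theorem exists_one_le_subset_closedBall {E : Type*} [SeminormedAddCommGroup E] {s : Set E}
    (hs : IsCompact s) : ∃ R ≥ 1, s ⊆ closedBall 0 R := by
  obtain ⟨R, hR⟩ := hs.isBounded.subset_closedBall 0
  exact ⟨max 1 R, le_max_left _ _, hR.trans (closedBall_subset_closedBall (le_max_right _ _))⟩

theorem critical_points_near_centroid_general {f g : EuclideanSpace ℝ (Fin n) → ℝ}
    (hf : ContDiff ℝ (⊤ : ℕ∞) f) (hg : ContDiff ℝ (⊤ : ℕ∞) g)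
    (hfc : HasCompactSupport f) (hgc : HasCompactSupport g) (hmass : ∫ y, (f + g) y ≠ 0)
    {u : EuclideanSpace ℝ (Fin n) → ℝ → ℝ}
    (hreg : ContDiffOn ℝ 2 (fun p : EuclideanSpace ℝ (Fin n) × ℝ => u p.1 p.2) (univ ×ˢ Ici 0))
    (hpde : ∀ x, ∀ t > (0 : ℝ),
      deriv (deriv fun s => u x s) t - lap (fun z => u z t) x + deriv (fun s => u x s) t = 0)
    (hu0 : ∀ x, u x 0 = f x) (hu1 : ∀ x, derivWithin (fun s => u x s) (Ici 0) 0 = g x)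
    {ψ : ℝ → ℝ} (hψ : Tendsto (fun t => ψ t / √t) atTop (𝓝 0)) :
    ∃ C > 0, ∀ᶠ t in atTop, ∀ x ∈ critSet (fun z => u z t) ∩
        (CS (f + g) + ψ t • closedBall (0 : EuclideanSpace ℝ (Fin n)) 1),
      ‖x - centroid (f + g)‖ ≤ C * ((1 + ψ t ^ 2) / t) := by
  obtain ⟨D, H, hU⟩ := exists_isDampedWave hreg hpde hu0 hu1
  obtain ⟨R, hR, hsupp⟩ := exists_one_le_subset_closedBall (hfc.isCompact.union hgc.isCompact)
  obtain ⟨hfR, hgR⟩ := union_subset_iff.1 hsupp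
  obtain ⟨A, hA, hmoment⟩ := hU.exists_norm_firstMoment_le hf hg hfR hgR hR
  set m := centroid (f + g)
  let C := A / |∫ y, (f + g) y|
  have hC : 0 < C := div_pos hA (abs_pos.2 hmass)
  have hsmall : ∀ᶠ t in atTop, C * ((2 * R + |ψ t|) ^ 2 / t) ≤ 1 / 2 := by
    refine ((tendsto_sq_div_of_tendsto_div_sqrt hψ (2 * R)).const_mul C).eventually_le_const ?_
    norm_num
  refine ⟨16 * C * (R + ‖m‖) * R ^ 2, by positivity, ?_⟩
  filter_upwards [hsmall, eventually_ge_atTop 1] with t hsmall_t ht x ⟨hcrit, hx⟩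
  have ht₀ : 0 < t := by linarith
  have hnorm := norm_le_of_mem_CS_add_smul_closedBall ((tsupport_add f g).trans hsupp) hx
  have hcubic := hmoment x t ht fun w =>
    fderiv_apply_eq_zero_of_mem_critSet (hU.hasFDerivAt (x, t) ht₀) hcrit w
  rw [firstMoment_eq_smul_sub_centroid (hf.continuous.add hg.continuous) (hfc.add hgc) hmass,
    norm_smul, Real.norm_eq_abs, ← le_div_iff₀' (abs_pos.2 hmass), div_right_comm,
    mul_div_right_comm] at hcubic
  have hsq : (2 * R + |ψ t|) ^ 2 ≤ 8 * R ^ 2 * (1 + ψ t ^ 2) := by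
    have hR₂ : 1 ≤ R ^ 2 := one_le_pow₀ hR
    rw [← sq_abs (ψ t)]
    nlinarith [sq_nonneg (2 * R - |ψ t|), le_mul_of_one_le_left (sq_nonneg |ψ t|) hR₂]
  calc ‖x - m‖ ≤ 2 * C * (R + ‖m‖) * ((2 * R + |ψ t|) ^ 2 / t) :=
        norm_sub_le_of_cubic_bound (by linarith) hC.le ht₀ (by linarith) hcubic hsmall_t
    _ ≤ 2 * C * (R + ‖m‖) * (8 * R ^ 2 * (1 + ψ t ^ 2) / t) := by gcongr
    _ = 16 * C * (R + ‖m‖) * R ^ 2 * ((1 + ψ t ^ 2) / t) := by ring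

/-- cf. Lemma `hp1`. For `ψ` non-decreasing with `ψ(0)=0`, `ψ(t)=o(√t)`,
there are `C > 0`, an integer `ℓ` (depending only on `n`) and `T ≥ T₀(ψ)` such that for all
`t ≥ T` and every critical point `x ∈ 𝒞(u(·,t)) ∩ (CS(h) + ψ(t)Bⁿ)` (`h = f + g`),
`|x − m_h| ≤ C((1+ψ(t)²)/t + ((1+ψ(t))/t)(‖f‖₁/‖h‖₁) + e^{-t/2} t^{3n/2}(‖f‖_{W^{ℓ,∞}} + ‖g‖_{W^{ℓ,∞}})/‖h‖₁)`. -/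
theorem critical_points_near_centroid (n : ℕ) (hn : 1 ≤ n)
    (f g : EuclideanSpace ℝ (Fin n) → ℝ)
    (hf : ContDiff ℝ (⊤ : ℕ∞) f) (hg : ContDiff ℝ (⊤ : ℕ∞) g)
    (hfc : HasCompactSupport f) (hgc : HasCompactSupport g)
    (hne : f + g ≠ 0) (hpos : ∀ x, 0 ≤ f x + g x)
    (u : EuclideanSpace ℝ (Fin n) → ℝ → ℝ)
    (hreg : ContDiffOn ℝ 2 (fun p : EuclideanSpace ℝ (Fin n) × ℝ => u p.1 p.2) (univ ×ˢ Ici 0))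
    (hpde : ∀ x, ∀ t > (0 : ℝ),
      deriv (deriv (fun s => u x s)) t - lap (fun z => u z t) x
        + deriv (fun s => u x s) t = 0)
    (hu0 : ∀ x, u x 0 = f x)
    (hu1 : ∀ x, derivWithin (fun s => u x s) (Ici 0) 0 = g x)
    (ψ : ℝ → ℝ) (hψ0 : ψ 0 = 0) (hψmono : MonotoneOn ψ (Ici 0))
    (hψnn : ∀ t ≥ (0 : ℝ), 0 ≤ ψ t)
    (hψo : Tendsto (fun t => ψ t / Real.sqrt t) atTop (𝓝 0)) :
    ∃ C > (0 : ℝ), ∃ ℓ : ℕ, ∃ T, T0 f g ψ ≤ T ∧ ∀ t ≥ T,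
      ∀ x ∈ critSet (fun z => u z t) ∩
        (CS (f + g) + ψ t • closedBall (0 : EuclideanSpace ℝ (Fin n)) 1),
        ‖x - centroid (f + g)‖ ≤
          C * ((1 + ψ t ^ 2) / t
            + ((1 + ψ t) / t) * (L1norm f / L1norm (f + g))
            + exp (-t / 2) * t ^ ((3 * (n : ℝ)) / 2) *
              ((sobNorm ℓ f + sobNorm ℓ g) / L1norm (f + g))) := by
  have hmass : 0 < ∫ y, (f + g) y :=
    (hf.continuous.add hg.continuous).integral_pos_of_hasCompactSupport_nonneg_nonzero
      (hfc.add hgc) hpos (Function.ne_iff.1 hne).choose_spec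
  obtain ⟨C, hC, hbound⟩ :=
    critical_points_near_centroid_general hf hg hfc hgc hmass.ne' hreg hpde hu0 hu1 hψo
  obtain ⟨T, hT⟩ :=
    (hbound.and (eventually_ge_atTop (max 1 (T0 f g ψ)))).exists_forall_of_atTop
  refine ⟨C, hC, 0, T, (le_max_right _ _).trans (hT T le_rfl).2, fun t ht x hx =>
    ((hT t ht).1 x hx).trans (mul_le_mul_of_nonneg_left ?_ hC.le)⟩
  have ht₀ : 0 ≤ t := zero_le_one.trans ((le_max_left _ _).trans (hT t ht).2)
  have hψt := hψnn t ht₀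
  have hsob := add_nonneg (sobNorm_nonneg 0 f) (sobNorm_nonneg 0 g)
  have hf₁ := L1norm_nonneg f
  have hsum₁ := L1norm_nonneg (f + g)
  rw [add_assoc]
  exact le_add_of_nonneg_right (by positivity)
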